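/- arXiv:1505.00617 — 7 statements merged into one kernel-verified Lean document; each statement's English description precedes it below -/
import Mathlib

section
/- Let n ∈ ℕ, let H ⊆ ℝ with |H| ≥ n+2, let ω = (ω_1,…,ω_n) be an n-dimensional positive Chebyshev system over H, and let ω_{n+1} : H → ℝ be such that ω* = (ω_1,…,ω_n,ω_{n+1}) is an (n+1)-dimensional positive Chebyshev system over H. Let x_0 < x_1 < ⋯ < x_{n+1} be elements of H. Then, for every j with 0 ≤ j ≤ n+1, there exists a constant A_j ∈ [0,1] such that for every function f : {x_0,…,x_{n+1}} → ℝ, [x_0,…,x_{j-1},x_{j+1},…,x_{n+1}; f]_{ω*} = A_j·[x_0,…,x_n; f]_{ω*} + (1−A_j)·[x_1,…,x_{n+1}; f]_{ω*}. -/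
/-- `Phi ω x` is the determinant `det(ωᵢ(xⱼ))` of an `n`-tuple of functions
evaluated at an `n`-tuple of points. -/
noncomputable def Phi {n : ℕ} (ω : Fin n → ℝ → ℝ) (x : Fin n → ℝ) : ℝ :=
  (Matrix.of fun i j => ω i (x j)).det

/-- `ω` is an `n`-dimensional positive Chebyshev system over `H`:
`Phi ω` is positive on all strictly increasing `n`-tuples of elements of `H`. -/
def IsPosChebyshev {n : ℕ} (ω : Fin n → ℝ → ℝ) (H : Set ℝ) : Prop :=
  ∀ x : Fin n → ℝ, StrictMono x → (∀ j, x j ∈ H) → 0 < Phi ω x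

/-- The generalized `ω*`-divided difference `[x₀,…,xₙ; f]_{ω*}`, where
`ω* = (ω₁,…,ωₙ,ω')`:  `Φ_{(ω,f)}(x) / Φ_{ω*}(x)`. -/
noncomputable def divDiff {n : ℕ} (ω : Fin n → ℝ → ℝ) (ω' : ℝ → ℝ) (f : ℝ → ℝ)
    (x : Fin (n + 1) → ℝ) : ℝ :=
  Phi (Fin.snoc ω f) x / Phi (Fin.snoc ω ω') x

/-!
With all but one column frozen, a minor of the matrix `(ωᵢ(xₖ))` is a linear combination of the
entries `ω₁(xₖ), …, ωₙ(xₖ)` of the free column. The signed determinants `(-1)ᵏ Φ_{(ω,f)}` with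
`xₖ` dropped are orthogonal to each row `(ωᵢ(xₖ))ₖ`, hence to such minors (a Plücker relation).
Freezing the columns at all points but `x₀`, `xⱼ`, `xₙ₊₁`, where `0 < j < n + 1`, leaves a
three-term relation `a P(f) = b Q(f) + c R(f)` between the determinants `Φ_{(ω,f)}` with `xⱼ`,
`xₙ₊₁`, `x₀` dropped, where `a`, `b`, `c` are values of `Φ_ω` and hence positive. Dividing it by
its instance at `f = ωₙ₊₁` gives the convex combination, with `A = b Q(ωₙ₊₁) / (a P(ωₙ₊₁))`.
-/

section Minors

variable {R : Type*} [CommRing R] {m n : ℕ}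

theorem sum_mul_det_succAbove_eq_zero (M : Matrix (Fin n) (Fin (n + 1)) R) (i : Fin n) :
    ∑ k : Fin (n + 1), (-1) ^ (k : ℕ) * M i k * (M.submatrix id k.succAbove).det = 0 := by
  have hrepeat : (M.submatrix (Fin.cons i id) id).det = 0 :=
    Matrix.det_zero_of_row_eq (Fin.succ_ne_zero i).symm rfl
  rw [← hrepeat, Matrix.det_succ_row_zero]
  rfl

theorem sum_det_cons_mul_det_succAbove_eq_zero (M : Matrix (Fin n) (Fin (n + 1)) R)
    (r : Fin (m + 1) → Fin n) (c : Fin m → Fin (n + 1)) :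
    ∑ k : Fin (n + 1), (-1) ^ (k : ℕ) * (M.submatrix r (Fin.cons k c)).det *
      (M.submatrix id k.succAbove).det = 0 := by
  have hcofactor (k : Fin (n + 1)) : (M.submatrix r (Fin.cons k c)).det =
      ∑ i : Fin (m + 1), (-1) ^ (i : ℕ) * M (r i) k * (M.submatrix (r ∘ i.succAbove) c).det :=
    Matrix.det_succ_column_zero _
  calc
    _ = ∑ i : Fin (m + 1), (-1) ^ (i : ℕ) * (M.submatrix (r ∘ i.succAbove) c).det *
          ∑ k : Fin (n + 1), (-1) ^ (k : ℕ) * M (r i) k * (M.submatrix id k.succAbove).det := by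
      simp only [hcofactor, Finset.mul_sum, Finset.sum_mul]
      rw [Finset.sum_comm]
      exact Finset.sum_congr rfl fun i _ => Finset.sum_congr rfl fun k _ => by ring
    _ = 0 := by simp only [sum_mul_det_succAbove_eq_zero, mul_zero, Finset.sum_const_zero]

theorem det_submatrix_insertNth {α β : Type*} (M : Matrix α β R) (r : Fin (n + 1) → α)
    (p : Fin (n + 1)) (b : β) (c : Fin n → β) :
    (M.submatrix r (p.insertNth b c : Fin (n + 1) → β)).det =
      (-1) ^ (p : ℕ) * (M.submatrix r (Fin.cons b c)).det := by
  have hperm := Matrix.det_permute' p.cycleRange (M.submatrix r (Fin.cons b c : Fin (n + 1) → β))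
  rw [Matrix.submatrix_submatrix, Fin.cons_comp_cycleRange, Fin.sign_cycleRange] at hperm
  simpa using hperm

theorem det_submatrix_cons_self {α β : Type*} (M : Matrix α β R) (r : Fin (n + 1) → α)
    (c : Fin n → β) (i : Fin n) : (M.submatrix r (Fin.cons (c i) c)).det = 0 :=
  Matrix.det_zero_of_column_eq (Fin.succ_ne_zero i).symm fun _ => rfl

theorem det_submatrix_mul_det_succAbove_eq_add (M : Matrix (Fin (n + 2)) (Fin (n + 3)) R)
    (r : Fin (n + 1) → Fin (n + 2)) (p : Fin (n + 1)) :
    (M.submatrix r (Fin.succ ∘ Fin.castSucc)).det *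
        (M.submatrix id p.castSucc.succ.succAbove).det =
      (M.submatrix r (p.castSucc.succ.succAbove ∘ Fin.succ)).det *
          (M.submatrix id Fin.castSucc).det +
        (M.submatrix r (p.castSucc.succ.succAbove ∘ Fin.castSucc)).det *
          (M.submatrix id Fin.succ).det := by
  -- The columns other than `0`, `p + 1` and the last.
  let c : Fin n → Fin (n + 3) := fun i => (p.succAbove i).castSucc.succ
  have hinner : p.insertNth p.castSucc.succ c = Fin.succ ∘ Fin.castSucc :=
    Fin.insertNth_eq_iff.mpr ⟨rfl, rfl⟩
  have hlast : (Fin.last n).insertNth (Fin.last (n + 2)) c =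
      p.castSucc.succ.succAbove ∘ Fin.succ :=
    Fin.insertNth_eq_iff.mpr ⟨by simp, by ext; simp [c, Fin.removeNth]⟩
  have hfirst : Fin.cons 0 c = p.castSucc.succ.succAbove ∘ Fin.castSucc := by
    ext i
    cases i using Fin.cases <;> simp [c]
  have hplucker := sum_det_cons_mul_det_succAbove_eq_zero M r c
  have hzero (i : Fin n) : (M.submatrix r (Fin.cons (p.succAbove i).castSucc.succ c)).det = 0 :=
    det_submatrix_cons_self M r c i
  rw [Fin.sum_univ_succ, Fin.sum_univ_castSucc, Fin.sum_univ_succAbove _ p] at hplucker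
  rw [← hinner, ← hlast, ← hfirst, det_submatrix_insertNth, det_submatrix_insertNth]
  simp only [hzero, mul_zero, zero_mul, Finset.sum_const_zero, add_zero, Fin.val_zero, Fin.val_succ,
    Fin.val_castSucc, Fin.val_last, Fin.succ_last, Fin.succAbove_zero, Fin.succAbove_last,
    Nat.succ_eq_add_one] at hplucker ⊢
  linear_combination -hplucker

end Minors

theorem exists_mem_Icc_div_eq_add_of_mul_eq_add {ι K : Type*} [Field K] [LinearOrder K]
    [IsStrictOrderedRing K] {a b c : K} {P Q R : ι → K} {i₀ : ι} (ha : 0 < a) (hb : 0 ≤ b)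
    (hc : 0 ≤ c) (hP : 0 < P i₀) (hQ : 0 < Q i₀) (hR : 0 < R i₀)
    (h : ∀ i, a * P i = b * Q i + c * R i) :
    ∃ A ∈ Set.Icc (0 : K) 1, ∀ i,
      P i / P i₀ = A * (Q i / Q i₀) + (1 - A) * (R i / R i₀) := by
  have hweight : 1 - b * Q i₀ / (a * P i₀) = c * R i₀ / (a * P i₀) := by
    have := h i₀
    field_simp
    linear_combination this
  refine ⟨b * Q i₀ / (a * P i₀), ⟨by positivity, ?_⟩, fun i => ?_⟩
  · rw [← sub_nonneg, hweight]
    positivity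
  · rw [hweight]
    field_simp
    linear_combination h i

theorem IsPosChebyshev.Phi_comp_pos {m n : ℕ} {ω : Fin n → ℝ → ℝ} {H : Set ℝ}
    (hω : IsPosChebyshev ω H) {x : Fin m → ℝ} (hx : StrictMono x) (hxH : ∀ i, x i ∈ H)
    {e : Fin n → Fin m} (he : StrictMono e) : 0 < Phi ω (x ∘ e) :=
  hω _ (hx.comp he) fun _ => hxH _

theorem Phi_mul_Phi_snoc_succAbove {n : ℕ} (ω : Fin (n + 1) → ℝ → ℝ) (x : Fin (n + 3) → ℝ)
    (p : Fin (n + 1)) (f : ℝ → ℝ) :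
    Phi ω (x ∘ Fin.succ ∘ Fin.castSucc) * Phi (Fin.snoc ω f) (x ∘ p.castSucc.succ.succAbove) =
      Phi ω (x ∘ p.castSucc.succ.succAbove ∘ Fin.succ) * Phi (Fin.snoc ω f) (x ∘ Fin.castSucc) +
        Phi ω (x ∘ p.castSucc.succ.succAbove ∘ Fin.castSucc) *
          Phi (Fin.snoc ω f) (x ∘ Fin.succ) := by
  let M : Matrix (Fin (n + 2)) (Fin (n + 3)) ℝ :=
    Matrix.of fun i k => (Fin.snoc ω f : Fin (n + 2) → ℝ → ℝ) i (x k)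
  have hminor (e : Fin (n + 1) → Fin (n + 3)) :
      (M.submatrix Fin.castSucc e).det = Phi ω (x ∘ e) := by
    congr 1
    ext i k
    simp [M]
  have hrel := det_submatrix_mul_det_succAbove_eq_add M Fin.castSucc p
  rw [hminor, hminor, hminor] at hrel
  exact hrel

/-- **Lemma 1.** Dropping the `j`-th point from a strictly increasing `(n+2)`-tuple,
the resulting divided difference is a convex combination (with a coefficient
`A ∈ [0,1]` independent of `f`) of the divided differences on the first and the
last `n+1` points. -/
theorem divDiff_dropPoint_convexCombination
    (n : ℕ) (hn : 0 < n) (H : Set ℝ) (hH : (↑(n + 2) : ℕ∞) ≤ H.encard)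
    (ω : Fin n → ℝ → ℝ) (ω' : ℝ → ℝ)
    (hω : IsPosChebyshev ω H) (hωs : IsPosChebyshev (Fin.snoc ω ω') H)
    (x : Fin (n + 2) → ℝ) (hx : StrictMono x) (hxH : ∀ i, x i ∈ H)
    (j : Fin (n + 2)) :
    ∃ A ∈ Set.Icc (0 : ℝ) 1, ∀ f : ℝ → ℝ,
      divDiff ω ω' f (fun i => x (j.succAbove i)) =
        A * divDiff ω ω' f (fun i : Fin (n + 1) => x i.castSucc) +
          (1 - A) * divDiff ω ω' f (fun i : Fin (n + 1) => x i.succ) := by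
  obtain ⟨m, rfl⟩ := Nat.exists_eq_add_one.mpr hn
  obtain rfl | ⟨k, rfl⟩ := j.eq_zero_or_eq_succ
  · exact ⟨0, by simp, fun f => by simp⟩
  obtain ⟨p, rfl⟩ | rfl := k.eq_castSucc_or_eq_last
  · have hinner := Fin.strictMono_succ.comp (Fin.strictMono_castSucc (n := m + 1))
    have hdrop := Fin.strictMono_succAbove p.castSucc.succ
    exact exists_mem_Icc_div_eq_add_of_mul_eq_add (i₀ := ω')
      (hω.Phi_comp_pos hx hxH hinner)
      (hω.Phi_comp_pos hx hxH (hdrop.comp Fin.strictMono_succ)).le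
      (hω.Phi_comp_pos hx hxH (hdrop.comp Fin.strictMono_castSucc)).le
      (hωs.Phi_comp_pos hx hxH hdrop)
      (hωs.Phi_comp_pos hx hxH Fin.strictMono_castSucc)
      (hωs.Phi_comp_pos hx hxH Fin.strictMono_succ)
      (Phi_mul_Phi_snoc_succAbove ω x p)
  · exact ⟨1, by simp, fun f => by simp⟩
end

section
/- Let n ∈ ℕ, let H ⊆ ℝ with |H| ≥ n+2, let ω = (ω_1,…,ω_n) be an n-dimensional positive Chebyshev system over H, and let ω_{n+1} : H → ℝ be such that ω* = (ω_1,…,ω_n,ω_{n+1}) is an (n+1)-dimensional positive Chebyshev system over H. Let m ∈ ℕ with n ≤ m ≤ |H|−1 and let x_0 < ⋯ < x_m be elements of H. Then, for all indices 0 ≤ i_0 < i_1 < ⋯ < i_n ≤ m, there exist constants A_0,…,A_{m-n} ∈ [0,1] with A_0 + ⋯ + A_{m-n} = 1 such that for every function f : {x_0,…,x_m} → ℝ, [x_{i_0},…,x_{i_n}; f]_{ω*} = Σ_{i=0}^{m-n} A_i·[x_i,…,x_{i+n}; f]_{ω*}. -/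
/-!
If a strictly increasing tuple of indices is not a window, a point `p` can be inserted strictly
between two of its neighbours. Deleting `p`, the first, or the last of the resulting `n + 2` points
gives three `(n + 1)`-tuples, whose determinants `Φ_{(ω,f)}` satisfy, for every `f`, a linear
relation with coefficients `Φ_ω > 0`. Dividing by `Φ_{(ω,ω')}`, the given divided difference lies,
as a functional of `f`, on the segment between the divided differences of two tuples of smaller
span; the coefficients sum to `1` because `[·; ω'] = 1`. Induction on the span puts it in the
convex hull of the windows.
-/

section Induction

variable {α : Type*} {n : ℕ}

theorem removeNth_apply_zero {k : Fin (n + 2)} (hk : k ≠ 0) (y : Fin (n + 2) → α) :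
    k.removeNth y 0 = y 0 := by
  rw [Fin.removeNth_apply, Fin.succAbove_ne_zero_zero hk]

theorem removeNth_apply_last {k : Fin (n + 2)} (hk : k ≠ Fin.last (n + 1)) (y : Fin (n + 2) → α) :
    k.removeNth y (Fin.last n) = y (Fin.last (n + 1)) := by
  rw [Fin.removeNth_apply, Fin.succAbove_ne_last_last hk]

theorem exists_removeNth_eq_of_not_covBy [Preorder α] {s : Fin (n + 1) → α} (hs : StrictMono s)
    {i : Fin n} (hi : ¬ s i.castSucc ⋖ s i.succ) :
    ∃ (y : Fin (n + 2) → α) (k : Fin (n + 2)),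
      StrictMono y ∧ k ≠ 0 ∧ k ≠ Fin.last (n + 1) ∧ k.removeNth y = s := by
  obtain ⟨a, hia, hai⟩ := exists_lt_lt_of_not_covBy (hs i.castSucc_lt_succ) hi
  refine ⟨i.castSucc.succ.insertNth a s, i.castSucc.succ, Fin.strictMono_insertNth hs i a hia hai,
    Fin.succ_ne_zero _, ?_, Fin.removeNth_insertNth _ _ _⟩
  rw [Fin.succ_castSucc]
  exact Fin.castSucc_ne_last _

theorem strictMono_tuple_induction [Preorder α] [LocallyFiniteOrder α]
    {motive : (Fin (n + 1) → α) → Prop}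
    (covBy : ∀ s, StrictMono s → (∀ i : Fin n, s i.castSucc ⋖ s i.succ) → motive s)
    (removeNth : ∀ (y : Fin (n + 2) → α) (k : Fin (n + 2)), StrictMono y → k ≠ 0 →
      k ≠ Fin.last (n + 1) → motive (Fin.tail y) → motive (Fin.init y) → motive (k.removeNth y))
    (s : Fin (n + 1) → α) (hs : StrictMono s) : motive s := by
  induction hN : (Finset.Icc (s 0) (s (Fin.last n))).card using Nat.strong_induction_on
    generalizing s with
  | h N ih =>
    subst hN
    by_cases hcov : ∀ i : Fin n, s i.castSucc ⋖ s i.succ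
    · exact covBy s hs hcov
    obtain ⟨i, hi⟩ := not_forall.mp hcov
    obtain ⟨y, k, hy, hk0, hkl, rfl⟩ := exists_removeNth_eq_of_not_covBy hs hi
    rw [removeNth_apply_zero hk0, removeNth_apply_last hkl] at ih
    have hends : y 0 ≤ y (Fin.last (n + 1)) := hy.monotone (Fin.zero_le _)
    refine removeNth y k hy hk0 hkl (ih _ ?_ _ (hy.comp Fin.strictMono_succ) rfl)
      (ih _ ?_ _ (hy.comp Fin.strictMono_castSucc) rfl)
    · exact Finset.card_lt_card
        (Finset.Icc_ssubset_Icc_left hends (hy (Fin.succ_pos 0)) le_rfl)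
    · exact Finset.card_lt_card
        (Finset.Icc_ssubset_Icc_right hends le_rfl (hy (Fin.castSucc_lt_last _)))

theorem val_eq_add_of_covBy {N : ℕ} {s : Fin (n + 1) → Fin N}
    (hs : ∀ i : Fin n, s i.castSucc ⋖ s i.succ) (j : Fin (n + 1)) : (s j : ℕ) = s 0 + j := by
  induction j using Fin.induction with
  | zero => simp
  | succ i ih =>
    have hi : (s i.castSucc : ℕ) + 1 = s i.succ := by simpa using hs i
    rw [← hi, ih, Fin.val_castSucc, Fin.val_succ, add_assoc]

end Induction

section CollocationDet

variable {R α : Type*} [CommRing R] {n : ℕ}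

/-- The collocation determinant `Φ_ω(x) = det (ωᵢ(xⱼ))`, with functions on any set of points and
values in any commutative ring; `Phi` is the case of real functions of a real variable. -/
def collocationDet (ω : Fin n → α → R) (x : Fin n → α) : R :=
  (Matrix.of fun i j => ω i (x j)).det

theorem collocationDet_eq_zero_of_eq (ω : Fin n → α → R) {x : Fin n → α} {i j : Fin n}
    (hij : i ≠ j) (hx : x i = x j) : collocationDet ω x = 0 :=
  Matrix.det_zero_of_column_eq hij fun l => by simp only [Matrix.of_apply, hx]

theorem collocationDet_update_sum_smul (ω : Fin n → α → R) (k : Fin n) (c : Fin n → R)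
    (x : Fin n → α) :
    collocationDet (Function.update ω k (∑ i, c i • ω i)) x = c k * collocationDet ω x := by
  rw [collocationDet, collocationDet, ← smul_eq_mul, ← Matrix.det_updateRow_sum]
  congr 1
  ext i j
  rcases eq_or_ne i k with rfl | hik
  · simp
  · simp [hik]

theorem collocationDet_cons (ω : Fin (n + 1) → α → R) (t : α) (p : Fin n → α) :
    collocationDet ω (Fin.cons t p) = (-1) ^ n * collocationDet ω (Fin.snoc p t) := by
  have hrotate : collocationDet ω (Fin.snoc p t) = (-1) ^ n * collocationDet ω (Fin.cons t p) := by
    rw [Fin.snoc_eq_cons_rotate]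
    refine (Matrix.det_permute' (finRotate (n + 1))
      (Matrix.of fun i j => ω i ((Fin.cons t p : Fin (n + 1) → α) j))).trans ?_
    simp [collocationDet]
  rw [hrotate, ← mul_assoc, ← mul_pow, neg_one_mul, neg_neg, one_pow, one_mul]

theorem collocationDet_snoc_right (ω : Fin (n + 1) → α → R) (p : Fin n → α) (t : α) :
    collocationDet ω (Fin.snoc p t) =
      ∑ i : Fin (n + 1), (-1) ^ (i + n : ℕ) * collocationDet (i.removeNth ω) p * ω i t := by
  rw [collocationDet, Matrix.det_succ_column _ (Fin.last n)]
  refine Finset.sum_congr rfl fun i _ => ?_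
  have hminor : (Matrix.of fun i j => ω i ((Fin.snoc p t : Fin (n + 1) → α) j)).submatrix
      i.succAbove (Fin.last n).succAbove = Matrix.of fun a b => i.removeNth ω a (p b) := by
    ext a b
    simp [Fin.removeNth_apply]
  rw [hminor, Matrix.of_apply, Fin.snoc_last, Fin.val_last, mul_right_comm]
  rfl

theorem collocationDet_snoc_left (ω : Fin n → α → R) (f : α → R) (x : Fin (n + 1) → α) :
    collocationDet (Fin.snoc ω f) x =
      ∑ j : Fin (n + 1), (-1) ^ (n + j : ℕ) * f (x j) * collocationDet ω (j.removeNth x) := by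
  rw [collocationDet, Matrix.det_succ_row _ (Fin.last n)]
  refine Finset.sum_congr rfl fun j _ => ?_
  have hminor : (Matrix.of fun i j => (Fin.snoc ω f : Fin (n + 1) → α → R) i (x j)).submatrix
      (Fin.last n).succAbove j.succAbove = Matrix.of fun a b => ω a (j.removeNth x b) := by
    ext a b
    simp [Fin.removeNth_apply]
  rw [hminor, Matrix.of_apply, Fin.snoc_last, Fin.val_last]
  rfl

theorem collocationDet_snoc_of_interior_eq_zero (hn : n ≠ 0) (ω : Fin n → α → R)
    {h : α → R} {x : Fin (n + 1) → α} (hx : ∀ j, j ≠ 0 → j ≠ Fin.last n → h (x j) = 0) :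
    collocationDet (Fin.snoc ω h) x =
      h (x (Fin.last n)) * collocationDet ω (Fin.init x) +
        (-1) ^ n * h (x 0) * collocationDet ω (Fin.tail x) := by
  have hne : Fin.last n ≠ 0 := by simpa [Fin.ext_iff] using hn
  rw [collocationDet_snoc_left, Fintype.sum_eq_add (Fin.last n) 0 hne]
  · simp
  · rintro j ⟨hjl, hj0⟩
    rw [hx j hj0 hjl, mul_zero, zero_mul]

theorem collocationDet_snoc_removeNth_of_interior_eq_zero (ω : Fin n → α → R)
    {h : α → R} {y : Fin (n + 2) → α} (hy : ∀ j, j ≠ 0 → j ≠ Fin.last (n + 1) → h (y j) = 0)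
    {k : Fin (n + 2)} (hk0 : k ≠ 0) (hkl : k ≠ Fin.last (n + 1)) :
    collocationDet (Fin.snoc ω h) (k.removeNth y) =
      h (y (Fin.last (n + 1))) * collocationDet ω (Fin.init (k.removeNth y)) +
        (-1) ^ n * h (y 0) * collocationDet ω (Fin.tail (k.removeNth y)) := by
  have hn : n ≠ 0 := by
    rintro rfl
    fin_cases k <;> simp_all
  rw [collocationDet_snoc_of_interior_eq_zero hn, removeNth_apply_zero hk0,
    removeNth_apply_last hkl]
  refine fun j hj0 hjl => hy _ (fun hj => hj0 ?_) (fun hj => hjl ?_)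
  · rwa [← Fin.succAbove_ne_zero_zero hk0, Fin.succAbove_right_inj] at hj
  · rwa [← Fin.succAbove_ne_last_last hkl, Fin.succAbove_right_inj] at hj

theorem collocationDet_snoc_collocationDet_snoc (ω : Fin n → α → R) (f : α → R) (p : Fin n → α)
    (x : Fin (n + 1) → α) :
    collocationDet (Fin.snoc ω fun t => collocationDet (Fin.snoc ω f) (Fin.snoc p t)) x =
      collocationDet ω p * collocationDet (Fin.snoc ω f) x := by
  set ωf : Fin (n + 1) → α → R := Fin.snoc ω f with hωf
  set c : Fin (n + 1) → R := fun i => (-1) ^ (i + n : ℕ) * collocationDet (i.removeNth ωf) p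
  have hcomb : (fun t => collocationDet ωf (Fin.snoc p t)) = ∑ i, c i • ωf i := by
    ext t
    simp [collocationDet_snoc_right, c]
  have hlast : c (Fin.last n) = collocationDet ω p := by simp [c, hωf]
  rw [hcomb, ← hlast, ← collocationDet_update_sum_smul, hωf, Fin.update_snoc_last]

theorem collocationDet_three_term (ω : Fin n → α → R) (f : α → R) (y : Fin (n + 2) → α)
    {k : Fin (n + 2)} (hk0 : k ≠ 0) (hkl : k ≠ Fin.last (n + 1)) :
    collocationDet ω (Fin.init (Fin.tail y)) * collocationDet (Fin.snoc ω f) (k.removeNth y) =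
      collocationDet ω (Fin.init (k.removeNth y)) * collocationDet (Fin.snoc ω f) (Fin.tail y) +
      collocationDet ω (Fin.tail (k.removeNth y)) * collocationDet (Fin.snoc ω f) (Fin.init y) := by
  -- A combination of `ω` and `f` vanishing at the interior points of `y`: both sides of the
  -- identity can be read off from its values at the two end points.
  let h : α → R := fun t =>
    collocationDet (Fin.snoc ω f) (Fin.snoc (Fin.init (Fin.tail y)) t)
  have h_interior : ∀ j, j ≠ 0 → j ≠ Fin.last (n + 1) → h (y j) = 0 := by
    intro j hj0 hjl
    obtain ⟨j, rfl⟩ := Fin.exists_succ_eq.mpr hj0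
    obtain ⟨i, rfl⟩ := Fin.exists_castSucc_eq.mpr
      (fun hj => hjl (by rw [hj, Fin.succ_last]) : j ≠ Fin.last n)
    refine collocationDet_eq_zero_of_eq _ (Fin.castSucc_lt_last i).ne ?_
    rw [Fin.snoc_castSucc, Fin.snoc_last]
    rfl
  have h_last : h (y (Fin.last (n + 1))) = collocationDet (Fin.snoc ω f) (Fin.tail y) :=
    congrArg (collocationDet _) (Fin.snoc_init_self (Fin.tail y))
  have h_zero : (-1) ^ n * h (y 0) = collocationDet (Fin.snoc ω f) (Fin.init y) := by
    rw [← collocationDet_cons, ← Fin.tail_init_eq_init_tail]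
    exact congrArg (collocationDet _) (Fin.cons_self_tail (Fin.init y))
  calc collocationDet ω (Fin.init (Fin.tail y)) * collocationDet (Fin.snoc ω f) (k.removeNth y)
      = collocationDet (Fin.snoc ω h) (k.removeNth y) :=
        (collocationDet_snoc_collocationDet_snoc ω f _ _).symm
    _ = h (y (Fin.last (n + 1))) * collocationDet ω (Fin.init (k.removeNth y)) +
          (-1) ^ n * h (y 0) * collocationDet ω (Fin.tail (k.removeNth y)) :=
        collocationDet_snoc_removeNth_of_interior_eq_zero ω h_interior hk0 hkl
    _ = _ := by
        rw [h_last, h_zero]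
        ring

/-- `ω` is a positive Chebyshev system over `H`: its collocation determinants at the strictly
increasing tuples of points of `H` are positive. -/
def IsPositiveChebyshevSystem [LT R] [Preorder α] (ω : Fin n → α → R) (H : Set α) : Prop :=
  ∀ x : Fin n → α, StrictMono x → (∀ j, x j ∈ H) → 0 < collocationDet ω x

end CollocationDet

section DividedDiff

variable {K α : Type*} [Field K] {n : ℕ}

/-- The generalized divided difference `[x₀,…,xₙ; f]_{ω*}` for `ω* = (ω₁,…,ωₙ,ω')`, with `f` as the
last argument so that `dividedDiff ω ω' x` is a vector of the space of functionals `(α → K) → K`. -/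
def dividedDiff (ω : Fin n → α → K) (ω' : α → K) (x : Fin (n + 1) → α) (f : α → K) : K :=
  collocationDet (Fin.snoc ω f) x / collocationDet (Fin.snoc ω ω') x

variable [LinearOrder K] [IsStrictOrderedRing K] [Preorder α]
  {ω : Fin n → α → K} {ω' : α → K} {H : Set α}

theorem dividedDiff_removeNth_mem_segment (hω : IsPositiveChebyshevSystem ω H)
    (hωs : IsPositiveChebyshevSystem (Fin.snoc ω ω') H) {y : Fin (n + 2) → α} (hy : StrictMono y)
    (hyH : ∀ i, y i ∈ H) {k : Fin (n + 2)} (hk0 : k ≠ 0) (hkl : k ≠ Fin.last (n + 1)) :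
    dividedDiff ω ω' (k.removeNth y) ∈
      segment K (dividedDiff ω ω' (Fin.tail y)) (dividedDiff ω ω' (Fin.init y)) := by
  have hyk : StrictMono (k.removeNth y) := hy.removeNth k
  have hyt : StrictMono (Fin.tail y) := hy.comp Fin.strictMono_succ
  have hyi : StrictMono (Fin.init y) := hy.comp Fin.strictMono_castSucc
  have hE : 0 < collocationDet ω (Fin.init (Fin.tail y)) :=
    hω _ (hyt.comp Fin.strictMono_castSucc) fun _ => hyH _
  have hA : 0 < collocationDet ω (Fin.init (k.removeNth y)) :=
    hω _ (hyk.comp Fin.strictMono_castSucc) fun _ => hyH _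
  have hB : 0 < collocationDet ω (Fin.tail (k.removeNth y)) :=
    hω _ (hyk.comp Fin.strictMono_succ) fun _ => hyH _
  have hDk : 0 < collocationDet (Fin.snoc ω ω') (k.removeNth y) := hωs _ hyk fun _ => hyH _
  have hDt : 0 < collocationDet (Fin.snoc ω ω') (Fin.tail y) := hωs _ hyt fun _ => hyH _
  have hDi : 0 < collocationDet (Fin.snoc ω ω') (Fin.init y) := hωs _ hyi fun _ => hyH _
  have hED : 0 < collocationDet ω (Fin.init (Fin.tail y)) *
      collocationDet (Fin.snoc ω ω') (k.removeNth y) := mul_pos hE hDk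
  refine ⟨_, _, (div_pos (mul_pos hA hDt) hED).le, (div_pos (mul_pos hB hDi) hED).le, ?_, ?_⟩
  · rw [← add_div, ← collocationDet_three_term ω ω' y hk0 hkl, div_self hED.ne']
  · ext f
    have hthree := collocationDet_three_term ω f y hk0 hkl
    simp only [Pi.add_apply, Pi.smul_apply, smul_eq_mul, dividedDiff]
    field_simp
    linear_combination -hthree

end DividedDiff

theorem mem_convexHull_range_iff_exists_stdSimplex {K E ι : Type*} [Field K] [LinearOrder K]
    [IsStrictOrderedRing K] [AddCommGroup E] [Module K E] [Fintype ι] {v : ι → E} {e : E} :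
    e ∈ convexHull K (Set.range v) ↔ ∃ w ∈ stdSimplex K ι, ∑ i, w i • v i = e := by
  classical
  have himage : convexHull K (Set.range v) = Fintype.linearCombination K v '' stdSimplex K ι := by
    rw [← convexHull_rangle_single_eq_stdSimplex, LinearMap.image_convexHull, ← Set.range_comp]
    congr 2
    ext i
    simp [Fintype.linearCombination_apply_single]
  simp only [himage, Set.mem_image, Fintype.linearCombination_apply]

section Window

variable {m n : ℕ}

/-- The indices `i, i + 1, …, i + n` of the `i`-th window of `n + 1` consecutive points among
`x₀, …, x_m`. -/
def windowIndex (hnm : n ≤ m) (i : Fin (m - n + 1)) (j : Fin (n + 1)) : Fin (m + 1) :=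
  ⟨i + j, by omega⟩

theorem exists_eq_windowIndex_of_covBy (hnm : n ≤ m) {s : Fin (n + 1) → Fin (m + 1)}
    (hs : ∀ i : Fin n, s i.castSucc ⋖ s i.succ) : ∃ i, s = windowIndex hnm i := by
  have hlast : (s (Fin.last n) : ℕ) = s 0 + n := val_eq_add_of_covBy hs (Fin.last n)
  exact ⟨⟨s 0, by omega⟩, funext fun j => Fin.ext (val_eq_add_of_covBy hs j)⟩

variable {K α : Type*} [Field K] [LinearOrder K] [IsStrictOrderedRing K] [Preorder α]
  {ω : Fin n → α → K} {ω' : α → K} {H : Set α}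

theorem dividedDiff_mem_convexHull_windows (hnm : n ≤ m) (hω : IsPositiveChebyshevSystem ω H)
    (hωs : IsPositiveChebyshevSystem (Fin.snoc ω ω') H) {x : Fin (m + 1) → α} (hx : StrictMono x)
    (hxH : ∀ i, x i ∈ H) {idx : Fin (n + 1) → Fin (m + 1)} (hidx : StrictMono idx) :
    dividedDiff ω ω' (x ∘ idx) ∈
      convexHull K (Set.range fun i => dividedDiff ω ω' (x ∘ windowIndex hnm i)) := by
  refine strictMono_tuple_induction (motive := fun s => dividedDiff ω ω' (x ∘ s) ∈ _)
    (fun s _ hcov => ?_) (fun y k hy hk0 hkl htail hinit => ?_) idx hidx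
  · obtain ⟨i, rfl⟩ := exists_eq_windowIndex_of_covBy hnm hcov
    exact subset_convexHull K _ (Set.mem_range_self i)
  · exact (convex_convexHull K _).segment_subset htail hinit <|
      dividedDiff_removeNth_mem_segment hω hωs (hx.comp hy) (fun _ => hxH _) hk0 hkl

theorem divDiff_convexCombination_of_windows_general
    (hnm : n ≤ m) (hω : IsPositiveChebyshevSystem ω H)
    (hωs : IsPositiveChebyshevSystem (Fin.snoc ω ω') H) {x : Fin (m + 1) → α} (hx : StrictMono x)
    (hxH : ∀ i, x i ∈ H) {idx : Fin (n + 1) → Fin (m + 1)} (hidx : StrictMono idx) :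
    ∃ A : Fin (m - n + 1) → K, (∀ i, A i ∈ Set.Icc (0 : K) 1) ∧ ∑ i, A i = 1 ∧
      ∀ f : α → K, dividedDiff ω ω' (x ∘ idx) f =
        ∑ i, A i * dividedDiff ω ω' (x ∘ windowIndex hnm i) f := by
  obtain ⟨A, hA, hsum⟩ := mem_convexHull_range_iff_exists_stdSimplex.mp
    (dividedDiff_mem_convexHull_windows hnm hω hωs hx hxH hidx)
  refine ⟨A, mem_Icc_of_mem_stdSimplex hA, hA.2, fun f => ?_⟩
  simp only [← hsum, Finset.sum_apply, Pi.smul_apply, smul_eq_mul]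

end Window

/-- **Theorem 1.** For `x₀ < ⋯ < x_m` in `H` and any strictly increasing choice of
indices `i₀ < ⋯ < iₙ`, the divided difference `[x_{i₀},…,x_{iₙ}; f]_{ω*}` is a convex
combination (with coefficients independent of `f`) of the divided differences on the
consecutive windows `x_i,…,x_{i+n}`, `0 ≤ i ≤ m−n`. -/
theorem divDiff_convexCombination_of_windows
    (n : ℕ) (hn : 0 < n) (H : Set ℝ) (hH : (↑(n + 2) : ℕ∞) ≤ H.encard)
    (ω : Fin n → ℝ → ℝ) (ω' : ℝ → ℝ)
    (hω : IsPosChebyshev ω H) (hωs : IsPosChebyshev (Fin.snoc ω ω') H)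
    (m : ℕ) (hnm : n ≤ m) (hm : (↑(m + 1) : ℕ∞) ≤ H.encard)
    (x : Fin (m + 1) → ℝ) (hx : StrictMono x) (hxH : ∀ i, x i ∈ H)
    (idx : Fin (n + 1) → Fin (m + 1)) (hidx : StrictMono idx) :
    ∃ A : Fin (m - n + 1) → ℝ, (∀ i, A i ∈ Set.Icc (0 : ℝ) 1) ∧ (∑ i, A i = 1) ∧
      ∀ f : ℝ → ℝ,
        divDiff ω ω' f (fun j => x (idx j)) =
          ∑ i : Fin (m - n + 1), A i *
            divDiff ω ω' f (fun j : Fin (n + 1) =>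
              x ⟨i.1 + j.1, by have h1 := i.2; have h2 := j.2; omega⟩) :=
  divDiff_convexCombination_of_windows_general hnm hω hωs hx hxH hidx
end

section
/- (Generalized Chain Inequality) Let n ∈ ℕ, let H ⊆ ℝ with |H| ≥ n+2, let ω = (ω_1,…,ω_n) be an n-dimensional positive Chebyshev system over H, and let ω_{n+1} : H → ℝ be such that ω* = (ω_1,…,ω_n,ω_{n+1}) is an (n+1)-dimensional positive Chebyshev system over H. Let m ∈ ℕ with n ≤ m ≤ |H|−1 and let x_0 < ⋯ < x_m be elements of H. Then, for all indices 0 ≤ i_0 < i_1 < ⋯ < i_n ≤ m and for every function f : {x_0,…,x_m} → ℝ, min_{0≤i≤m−n} [x_i,…,x_{i+n}; f]_{ω*} ≤ [x_{i_0},…,x_{i_n}; f]_{ω*} ≤ max_{0≤i≤m−n} [x_i,…,x_{i+n}; f]_{ω*}. -/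
/-!
Adding a multiple of `ωᵢ` to `g` does not change `Φ_{(ω,g)}`, so `g` may be replaced by a function
vanishing at `n` prescribed points. For `n + 2` points `z` and vanishing at the `n` interior ones,
the Laplace expansions then give a three-term Plücker relation that writes `Φ_{(ω,g)}` of `z`
without an interior point as a positive combination of `Φ_{(ω,g)}` of `z` without its first and
without its last point. A tuple of indices with a gap is obtained by removing an inserted index
from an `(n + 2)`-tuple, and removing an end of that tuple shortens the span. Hence, by induction
on the span, `Φ_{(ω,g)}` is nonnegative on all tuples once it is so on the consecutive ones. For
`g = f - c ω'` this says that a lower bound `c` of the divided differences of `f` on consecutive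
tuples is a lower bound on all tuples; upper bounds follow by passing to `-f`.
-/

/-- The linear functional `h ↦ Φ_{(ω,h)}(y)`, given by the Laplace expansion of the determinant
along its last row; see `phiSnoc_apply`. -/
noncomputable def phiSnoc {n : ℕ} (ω : Fin n → ℝ → ℝ) (y : Fin (n + 1) → ℝ) :
    (ℝ → ℝ) →ₗ[ℝ] ℝ :=
  ∑ j : Fin (n + 1), ((-1) ^ (n + (j : ℕ)) * Phi ω (y ∘ j.succAbove)) • LinearMap.proj (y j)

/-- A tuple is consecutive if each of its entries is covered by the next one. In `Fin (m + 1)`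
these are the windows `i, i + 1, …, i + n`. -/
def IsConsecutive {α : Type*} [LT α] {n : ℕ} (w : Fin (n + 1) → α) : Prop :=
  ∀ j : Fin n, w j.castSucc ⋖ w j.succ

theorem exists_castSucc_succ_eq {n : ℕ} {i : Fin (n + 2)} (h_zero : i ≠ 0)
    (h_last : i ≠ Fin.last (n + 1)) : ∃ j : Fin n, j.castSucc.succ = i := by
  obtain ⟨i, rfl⟩ := Fin.exists_succ_eq.2 h_zero
  have hi : i ≠ Fin.last n := fun h => h_last (by rw [h, Fin.succ_last])
  obtain ⟨j, rfl⟩ := Fin.exists_castSucc_eq.2 hi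
  exact ⟨j, rfl⟩

section Determinant

variable {n : ℕ} (ω : Fin n → ℝ → ℝ) (y : Fin (n + 1) → ℝ)

theorem phiSnoc_eq_sum (h : ℝ → ℝ) :
    phiSnoc ω y h =
      ∑ j : Fin (n + 1), (-1) ^ (n + (j : ℕ)) * Phi ω (y ∘ j.succAbove) * h (y j) := by
  simp [phiSnoc]

theorem phiSnoc_apply (h : ℝ → ℝ) : phiSnoc ω y h = Phi (Fin.snoc ω h) y := by
  rw [phiSnoc_eq_sum, Phi, Matrix.det_succ_row _ (Fin.last n)]
  refine Finset.sum_congr rfl fun j _ => ?_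
  have minor : (Matrix.of fun i k => Fin.snoc (α := fun _ => ℝ → ℝ) ω h i (y k)).submatrix
      (Fin.last n).succAbove j.succAbove = Matrix.of fun i k => ω i ((y ∘ j.succAbove) k) := by
    ext i k
    simp
  simp only [minor, Phi, Matrix.of_apply, Fin.snoc_last, Fin.val_last]
  ring

theorem phiSnoc_apply_self (i : Fin n) : phiSnoc ω y (ω i) = 0 := by
  rw [phiSnoc_apply, Phi]
  refine Matrix.det_zero_of_row_eq (Fin.castSucc_lt_last i).ne ?_
  ext j
  simp

variable {ω y}

theorem phiSnoc_eq_of_forall_ne {h : ℝ → ℝ} (p : Fin (n + 1)) (hp : ∀ j ≠ p, h (y j) = 0) :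
    phiSnoc ω y h = (-1) ^ (n + (p : ℕ)) * Phi ω (y ∘ p.succAbove) * h (y p) := by
  rw [phiSnoc_eq_sum]
  exact Fintype.sum_eq_single p fun j hj => by rw [hp j hj, mul_zero]

theorem phiSnoc_eq_add_of_forall_ne {h : ℝ → ℝ} {p q : Fin (n + 1)} (hpq : p ≠ q)
    (h_zero : ∀ j, j ≠ p ∧ j ≠ q → h (y j) = 0) :
    phiSnoc ω y h =
      (-1) ^ (n + (p : ℕ)) * Phi ω (y ∘ p.succAbove) * h (y p) +
        (-1) ^ (n + (q : ℕ)) * Phi ω (y ∘ q.succAbove) * h (y q) := by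
  rw [phiSnoc_eq_sum]
  exact Fintype.sum_eq_add p q hpq fun j hj => by rw [h_zero j hj, mul_zero]

theorem exists_linearCombination_interpolating {w : Fin n → ℝ} (hw : Phi ω w ≠ 0)
    (g : ℝ → ℝ) : ∃ c : Fin n → ℝ, ∀ j, (∑ i, c i • ω i) (w j) = g (w j) := by
  have surjective : Function.Surjective fun c => Matrix.vecMul c (Matrix.of fun i j => ω i (w j)) :=
    Matrix.vecMul_surjective_iff_isUnit.2 ((Matrix.isUnit_iff_isUnit_det _).2 hw.isUnit)
  obtain ⟨c, hc⟩ := surjective (g ∘ w)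
  refine ⟨c, fun j => ?_⟩
  simpa [Matrix.vecMul, dotProduct] using congrFun hc j

theorem exists_forall_eq_zero_and_phiSnoc_eq {w : Fin n → ℝ} (hw : Phi ω w ≠ 0) (g : ℝ → ℝ) :
    ∃ h : ℝ → ℝ, (∀ j, h (w j) = 0) ∧ ∀ y, phiSnoc ω y h = phiSnoc ω y g := by
  obtain ⟨c, hc⟩ := exists_linearCombination_interpolating hw g
  refine ⟨g - ∑ i, c i • ω i, fun j => by rw [Pi.sub_apply, hc, sub_self], fun y => ?_⟩
  simp [phiSnoc_apply_self]

theorem phiSnoc_succAbove_of_interior_eq_zero {z : Fin (n + 2) → ℝ} {h : ℝ → ℝ}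
    (h_zero : ∀ j : Fin n, h (z j.castSucc.succ) = 0) (k : Fin n) :
    phiSnoc ω (z ∘ k.castSucc.succ.succAbove) h =
      (-1) ^ n * Phi ω (z ∘ k.castSucc.succ.succAbove ∘ Fin.succ) * h (z 0) +
        Phi ω (z ∘ k.castSucc.succ.succAbove ∘ Fin.castSucc) * h (z (Fin.last (n + 1))) := by
  have zero_ne_last : (0 : Fin (n + 1)) ≠ Fin.last n :=
    ((Fin.zero_le _).trans_lt (Fin.castSucc_lt_last k)).ne
  rw [phiSnoc_eq_add_of_forall_ne zero_ne_last]
  · simp [Function.comp_assoc, Fin.succAbove_last]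
  · rintro j ⟨hj_zero, hj_last⟩
    obtain ⟨i, hi⟩ := exists_castSucc_succ_eq
      (mt (Fin.succAbove_eq_zero_iff (Fin.succ_ne_zero k.castSucc)).1 hj_zero)
      (mt (Fin.succAbove_eq_last_iff (Fin.castSucc_lt_last k.succ).ne).1 hj_last)
    rw [Function.comp_apply, ← hi, h_zero]

theorem phiSnoc_plucker_relation {z : Fin (n + 2) → ℝ}
    (hz : Phi ω (fun j => z j.castSucc.succ) ≠ 0) (g : ℝ → ℝ) (k : Fin n) :
    phiSnoc ω (z ∘ k.castSucc.succ.succAbove) g * Phi ω (fun j => z j.castSucc.succ) =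
      phiSnoc ω (z ∘ Fin.castSucc) g * Phi ω (z ∘ k.castSucc.succ.succAbove ∘ Fin.succ) +
        phiSnoc ω (z ∘ Fin.succ) g * Phi ω (z ∘ k.castSucc.succ.succAbove ∘ Fin.castSucc) := by
  obtain ⟨h, h_zero, hg⟩ := exists_forall_eq_zero_and_phiSnoc_eq hz g
  have without_last : phiSnoc ω (z ∘ Fin.castSucc) h =
      (-1) ^ n * Phi ω (fun j => z j.castSucc.succ) * h (z 0) := by
    rw [phiSnoc_eq_of_forall_ne 0 fun j hj => ?_]
    · simp [Function.comp_def]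
    · obtain ⟨i, rfl⟩ := Fin.exists_succ_eq.2 hj
      exact h_zero i
  have without_first : phiSnoc ω (z ∘ Fin.succ) h =
      Phi ω (fun j => z j.castSucc.succ) * h (z (Fin.last (n + 1))) := by
    rw [phiSnoc_eq_of_forall_ne (Fin.last n) fun j hj => ?_]
    · simp [Function.comp_def, Fin.succAbove_last]
    · obtain ⟨i, rfl⟩ := Fin.exists_castSucc_eq.2 hj
      exact h_zero i
  rw [← hg, ← hg, ← hg, without_last, without_first, phiSnoc_succAbove_of_interior_eq_zero h_zero]
  ring

theorem IsPosChebyshev.phiSnoc_succAbove_nonneg {H : Set ℝ} (hω : IsPosChebyshev ω H)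
    {z : Fin (n + 2) → ℝ} (hz : StrictMono z) (hzH : ∀ i, z i ∈ H) {g : ℝ → ℝ}
    (h_init : 0 ≤ phiSnoc ω (z ∘ Fin.castSucc) g) (h_tail : 0 ≤ phiSnoc ω (z ∘ Fin.succ) g)
    (k : Fin n) : 0 ≤ phiSnoc ω (z ∘ k.castSucc.succ.succAbove) g := by
  have phi_pos {e : Fin n → Fin (n + 2)} (he : StrictMono e) : 0 < Phi ω (z ∘ e) :=
    hω _ (hz.comp he) fun _ => hzH _
  have succAbove_mono := Fin.strictMono_succAbove k.castSucc.succ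
  have interior_pos : 0 < Phi ω (fun j => z j.castSucc.succ) :=
    phi_pos (Fin.strictMono_succ.comp Fin.strictMono_castSucc)
  refine nonneg_of_mul_nonneg_left ?_ interior_pos
  rw [phiSnoc_plucker_relation interior_pos.ne']
  exact add_nonneg
    (mul_nonneg h_init (phi_pos (succAbove_mono.comp Fin.strictMono_succ)).le)
    (mul_nonneg h_tail (phi_pos (succAbove_mono.comp Fin.strictMono_castSucc)).le)

end Determinant

section DividedDifference

variable {n : ℕ} {ω : Fin n → ℝ → ℝ} {ω' : ℝ → ℝ} {y : Fin (n + 1) → ℝ}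

theorem divDiff_eq_phiSnoc_div (f : ℝ → ℝ) :
    divDiff ω ω' f y = phiSnoc ω y f / phiSnoc ω y ω' := by
  rw [divDiff, phiSnoc_apply, phiSnoc_apply]

theorem IsPosChebyshev.phiSnoc_pos {H : Set ℝ} (hωs : IsPosChebyshev (Fin.snoc ω ω') H)
    (hy : StrictMono y) (hyH : ∀ i, y i ∈ H) : 0 < phiSnoc ω y ω' := by
  rw [phiSnoc_apply]
  exact hωs y hy hyH

theorem le_divDiff_iff {f : ℝ → ℝ} {c : ℝ} (hy : 0 < phiSnoc ω y ω') :
    c ≤ divDiff ω ω' f y ↔ 0 ≤ phiSnoc ω y (f - c • ω') := by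
  rw [divDiff_eq_phiSnoc_div, le_div_iff₀ hy, map_sub, map_smul, smul_eq_mul, sub_nonneg]

theorem divDiff_neg (f : ℝ → ℝ) : divDiff ω ω' (-f) y = -divDiff ω ω' f y := by
  simp only [divDiff_eq_phiSnoc_div, map_neg, neg_div]

end DividedDifference

section Consecutive

variable {α : Type*} {n : ℕ}

theorem IsConsecutive.strictMono [Preorder α] {w : Fin (n + 1) → α} (hw : IsConsecutive w) :
    StrictMono w :=
  Fin.strictMono_iff_lt_succ.2 fun j => (hw j).lt

theorem IsConsecutive.val_eq_add {m : ℕ} {w : Fin (n + 1) → Fin m} (hw : IsConsecutive w)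
    (j : Fin (n + 1)) : (w j : ℕ) = w 0 + j := by
  induction j using Fin.induction with
  | zero => simp
  | succ j ih =>
    have := hw j
    rw [Fin.covBy_iff, Nat.covBy_iff_add_one_eq] at this
    rw [← this, ih, Fin.val_castSucc, Fin.val_succ, add_assoc]

theorem exists_insertion_of_not_isConsecutive [Preorder α] {e : Fin (n + 1) → α}
    (he : StrictMono e) (h_gap : ¬ IsConsecutive e) :
    ∃ (z : Fin (n + 2) → α) (k : Fin n), StrictMono z ∧ z ∘ k.castSucc.succ.succAbove = e := by
  obtain ⟨k, hk⟩ := not_forall.1 h_gap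
  obtain ⟨a, ha_gt, ha_lt⟩ := (not_covBy_iff (he Fin.castSucc_lt_succ)).1 hk
  exact ⟨k.castSucc.succ.insertNth a e, k, Fin.strictMono_insertNth he k a ha_gt ha_lt,
    funext fun j => Fin.insertNth_apply_succAbove ..⟩

theorem IsConsecutive.strictMono_induction [Preorder α] [LocallyFiniteOrder α]
    {P : (Fin (n + 1) → α) → Prop} (consecutive : ∀ w, IsConsecutive w → P w)
    (insertion : ∀ z : Fin (n + 2) → α, StrictMono z → P (z ∘ Fin.castSucc) → P (z ∘ Fin.succ) →
      ∀ k : Fin n, P (z ∘ k.castSucc.succ.succAbove))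
    (e : Fin (n + 1) → α) (he : StrictMono e) : P e := by
  induction h_span : Finset.Icc (e 0) (e (Fin.last n)) using Finset.strongInduction
    generalizing e with
  | H span ih =>
    by_cases h : IsConsecutive e
    · exact consecutive e h
    obtain ⟨z, k, hz, rfl⟩ := exists_insertion_of_not_isConsecutive he h
    obtain rfl : Finset.Icc (z 0) (z (Fin.last (n + 1))) = span := by simpa using h_span
    have z_le := hz.monotone (Fin.zero_le (Fin.last (n + 1)))
    exact insertion z hz
      (ih _ (Finset.Icc_ssubset_Icc_right z_le le_rfl (hz (Fin.castSucc_lt_last _))) _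
        (hz.comp Fin.strictMono_castSucc) rfl)
      (ih _ (Finset.Icc_ssubset_Icc_left z_le (hz (Fin.succ_pos 0)) le_rfl) _
        (hz.comp Fin.strictMono_succ) rfl) k

end Consecutive

section ChainInequality

variable {α : Type*} [Preorder α] [LocallyFiniteOrder α] {n : ℕ} {ω : Fin n → ℝ → ℝ}
  {H : Set ℝ} {x : α → ℝ} {e : Fin (n + 1) → α}

theorem IsPosChebyshev.phiSnoc_nonneg_of_isConsecutive (hω : IsPosChebyshev ω H)
    (hx : StrictMono x) (hxH : ∀ i, x i ∈ H) {g : ℝ → ℝ}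
    (hg : ∀ w : Fin (n + 1) → α, IsConsecutive w → 0 ≤ phiSnoc ω (x ∘ w) g) (he : StrictMono e) :
    0 ≤ phiSnoc ω (x ∘ e) g :=
  IsConsecutive.strictMono_induction (P := fun e => 0 ≤ phiSnoc ω (x ∘ e) g) hg
    (fun _ hz h_init h_tail k =>
      hω.phiSnoc_succAbove_nonneg (hx.comp hz) (fun _ => hxH _) h_init h_tail k) e he

variable {ω' : ℝ → ℝ}

theorem le_divDiff_of_isConsecutive (hω : IsPosChebyshev ω H)
    (hωs : IsPosChebyshev (Fin.snoc ω ω') H) (hx : StrictMono x) (hxH : ∀ i, x i ∈ H)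
    {f : ℝ → ℝ} {c : ℝ}
    (hc : ∀ w : Fin (n + 1) → α, IsConsecutive w → c ≤ divDiff ω ω' f (x ∘ w))
    (he : StrictMono e) : c ≤ divDiff ω ω' f (x ∘ e) := by
  have phiSnoc_pos {e : Fin (n + 1) → α} (he : StrictMono e) : 0 < phiSnoc ω (x ∘ e) ω' :=
    hωs.phiSnoc_pos (hx.comp he) fun _ => hxH _
  refine (le_divDiff_iff (phiSnoc_pos he)).2 ?_
  exact hω.phiSnoc_nonneg_of_isConsecutive hx hxH
    (fun w hw => (le_divDiff_iff (phiSnoc_pos hw.strictMono)).1 (hc w hw)) he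

theorem divDiff_le_of_isConsecutive (hω : IsPosChebyshev ω H)
    (hωs : IsPosChebyshev (Fin.snoc ω ω') H) (hx : StrictMono x) (hxH : ∀ i, x i ∈ H)
    {f : ℝ → ℝ} {c : ℝ}
    (hc : ∀ w : Fin (n + 1) → α, IsConsecutive w → divDiff ω ω' f (x ∘ w) ≤ c)
    (he : StrictMono e) : divDiff ω ω' f (x ∘ e) ≤ c := by
  have neg_bound := le_divDiff_of_isConsecutive hω hωs hx hxH (f := -f) (c := -c)
    (fun w hw => by simpa [divDiff_neg] using hc w hw) he
  simpa [divDiff_neg] using neg_bound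

end ChainInequality

/-- **Generalized Chain Inequality.** For `x₀ < ⋯ < x_m` in `H`, any strictly increasing
choice of indices `i₀ < ⋯ < iₙ` and any function `f`, the divided difference
`[x_{i₀},…,x_{iₙ}; f]_{ω*}` lies between the minimum and the maximum of the divided
differences on the consecutive windows `x_i,…,x_{i+n}`, `0 ≤ i ≤ m−n`. -/
theorem divDiff_chain_inequality
    (n : ℕ) (hn : 0 < n) (H : Set ℝ) (hH : (↑(n + 2) : ℕ∞) ≤ H.encard)
    (ω : Fin n → ℝ → ℝ) (ω' : ℝ → ℝ)
    (hω : IsPosChebyshev ω H) (hωs : IsPosChebyshev (Fin.snoc ω ω') H)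
    (m : ℕ) (hnm : n ≤ m) (hm : (↑(m + 1) : ℕ∞) ≤ H.encard)
    (x : Fin (m + 1) → ℝ) (hx : StrictMono x) (hxH : ∀ i, x i ∈ H)
    (idx : Fin (n + 1) → Fin (m + 1)) (hidx : StrictMono idx) (f : ℝ → ℝ) :
    Finset.univ.inf' ⟨0, Finset.mem_univ 0⟩
        (fun i : Fin (m - n + 1) => divDiff ω ω' f (fun j : Fin (n + 1) =>
          x ⟨i.1 + j.1, by have h1 := i.2; have h2 := j.2; omega⟩)) ≤
      divDiff ω ω' f (fun j => x (idx j)) ∧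
    divDiff ω ω' f (fun j => x (idx j)) ≤
      Finset.univ.sup' ⟨0, Finset.mem_univ 0⟩
        (fun i : Fin (m - n + 1) => divDiff ω ω' f (fun j : Fin (n + 1) =>
          x ⟨i.1 + j.1, by have h1 := i.2; have h2 := j.2; omega⟩)) := by
  have eq_window (w : Fin (n + 1) → Fin (m + 1)) (hw : IsConsecutive w) :
      ∃ i : Fin (m - n + 1), x ∘ w = fun j : Fin (n + 1) => x ⟨i + j, by omega⟩ := by
    have h_last := hw.val_eq_add (Fin.last n)
    rw [Fin.val_last] at h_last
    exact ⟨⟨w 0, by omega⟩, funext fun j => congrArg x (Fin.ext (hw.val_eq_add j))⟩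
  constructor
  · refine le_divDiff_of_isConsecutive hω hωs hx hxH (fun w hw => ?_) hidx
    obtain ⟨i, hi⟩ := eq_window w hw
    exact Finset.inf'_le_of_le _ (Finset.mem_univ i) (by rw [hi])
  · refine divDiff_le_of_isConsecutive hω hωs hx hxH (fun w hw => ?_) hidx
    obtain ⟨i, hi⟩ := eq_window w hw
    exact Finset.le_sup'_of_le _ (Finset.mem_univ i) (by rw [hi])
end

section
/- Let n ∈ ℕ, let H ⊆ ℝ with |H| ≥ n+2, and let ω = (ω_1,…,ω_n) be an n-dimensional positive Chebyshev system over H. Let m ∈ ℕ with n ≤ m ≤ |H|−1, let x_0 < ⋯ < x_m be elements of H, and let f : {x_0,…,x_m} → ℝ. If Φ_{(ω,f)}(x_i,…,x_{i+n}) ≥ 0 for all 0 ≤ i ≤ m−n, then for all indices 0 ≤ i_0 < i_1 < ⋯ < i_n ≤ m one has Φ_{(ω,f)}(x_{i_0},…,x_{i_n}) ≥ 0; that is, if f is ω-convex on every set of n+1 consecutive points {x_i,…,x_{i+n}}, then f is ω-convex on {x_0,…,x_m}. -/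
/-!
For `n + 2` columns `0, …, n + 1`, write `Fₖ` for the full minor omitting column `k`, and `Eₖₗ` for
the minor of the first `n` rows omitting the columns `k` and `l`. The Plücker relation
`E₀,ₙ₊₁ Fₖ = Eₖ,₀ Fₙ₊₁ + Eₖ,ₙ₊₁ F₀` expresses `Fₖ`, up to a positive factor, as a nonnegative
combination of the minors `Fₙ₊₁` and `F₀`, which omit an end column. A tuple of indices with a gap
is of the form `Fₖ` once an index from the gap is inserted, while both `Fₙ₊₁` and `F₀` have shorter
range; so everything reduces to tuples without gaps.
-/

open Matrix

section Pluecker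

variable {R : Type*} [CommRing R] {n : ℕ}

lemma mul_det_eq_sum_vecMul_mul_det (B : Matrix (Fin (n + 1)) (Fin (n + 1)) R)
    (c : Fin (n + 1) → R) (i : Fin (n + 1)) :
    c i * B.det = ∑ j : Fin (n + 1),
      (-1) ^ (i + j : ℕ) * (c ᵥ* B) j * (B.submatrix i.succAbove j.succAbove).det := by
  rw [← smul_eq_mul, ← det_updateRow_sum, ← vecMul_eq_sum, det_succ_row _ i]
  simp only [updateRow_self, submatrix_updateRow_succAbove]

lemma adjugate_last_vecMul_succ (A : Matrix (Fin (n + 1)) (Fin (n + 2)) R) (j : Fin (n + 1)) :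
    ((A.submatrix id Fin.succ).adjugate (Fin.last n) ᵥ* A) j.succ =
      if j = Fin.last n then (A.submatrix id Fin.succ).det else 0 := by
  simpa [mul_apply, one_apply, vecMul, dotProduct, eq_comm] using
    congrFun₂ (adjugate_mul (A.submatrix id Fin.succ)) (Fin.last n) j

lemma adjugate_last_vecMul_zero (A : Matrix (Fin (n + 1)) (Fin (n + 2)) R) :
    ((A.submatrix id Fin.succ).adjugate (Fin.last n) ᵥ* A) 0 =
      (-1) ^ n * (A.submatrix id Fin.castSucc).det := by
  rw [det_succ_column_zero, Finset.mul_sum, vecMul, dotProduct]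
  refine Finset.sum_congr rfl fun i _ => ?_
  simp only [adjugate_fin_succ_eq_det_submatrix, submatrix_submatrix, submatrix_apply, id_eq,
    Fin.val_last, Fin.succAbove_last, Fin.castSucc_zero, Function.comp_def, Fin.succ_castSucc]
  ring

lemma neg_one_pow_mul_adjugate_last_vecMul_succAbove (A : Matrix (Fin (n + 1)) (Fin (n + 2)) R)
    (k : Fin n) (j : Fin (n + 1)) :
    (-1) ^ (n + j : ℕ) *
        ((A.submatrix id Fin.succ).adjugate (Fin.last n) ᵥ* A) (k.castSucc.succ.succAbove j) =
      (if j = 0 then (A.submatrix id Fin.castSucc).det else 0) +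
        if j = Fin.last n then (A.submatrix id Fin.succ).det else 0 := by
  obtain _ | n := n
  · exact k.elim0
  cases j using Fin.cases with
  | zero => simp [adjugate_last_vecMul_zero, ← mul_assoc, ← pow_add]
  | succ i =>
    have hlast : k.castSucc.succAbove i = Fin.last (n + 1) ↔ i.succ = Fin.last (n + 1) := by
      rw [Fin.succAbove_eq_last_iff (Fin.castSucc_lt_last k).ne, ← Fin.succ_last, Fin.succ_inj]
    rw [Fin.succ_succAbove_succ, adjugate_last_vecMul_succ]
    simp only [hlast, Fin.succ_ne_zero, if_false, zero_add]
    split_ifs with hi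
    · simp [hi]
    · rw [mul_zero]

theorem det_submatrix_pluecker (A : Matrix (Fin (n + 1)) (Fin (n + 2)) R) (k : Fin n) :
    (A.submatrix Fin.castSucc (Fin.succ ∘ Fin.castSucc)).det *
        (A.submatrix id k.castSucc.succ.succAbove).det =
      (A.submatrix id Fin.castSucc).det *
          (A.submatrix Fin.castSucc (Fin.succ ∘ k.castSucc.succAbove)).det +
        (A.submatrix id Fin.succ).det *
          (A.submatrix Fin.castSucc (Fin.castSucc ∘ k.succ.succAbove)).det := by
  -- The last row of this adjugate gives a combination of the rows of `A` that vanishes at every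
  -- column except the two end ones.
  set c := (A.submatrix id Fin.succ).adjugate (Fin.last n) with hc
  have hc_last : c (Fin.last n) = (A.submatrix Fin.castSucc (Fin.succ ∘ Fin.castSucc)).det := by
    simp [hc, adjugate_fin_succ_eq_det_submatrix, Function.comp_def]
  have hcols (j : Fin (n + 1)) :
      (-1) ^ (n + j : ℕ) * (c ᵥ* A.submatrix id k.castSucc.succ.succAbove) j =
        (if j = 0 then (A.submatrix id Fin.castSucc).det else 0) +
          if j = Fin.last n then (A.submatrix id Fin.succ).det else 0 :=
    neg_one_pow_mul_adjugate_last_vecMul_succAbove A k j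
  have hcomp_zero : k.castSucc.succ.succAbove ∘ Fin.succ = Fin.succ ∘ k.castSucc.succAbove :=
    funext (Fin.succ_succAbove_succ _)
  have hcomp_last :
      k.castSucc.succ.succAbove ∘ Fin.castSucc = Fin.castSucc ∘ k.succ.succAbove :=
    funext fun _ => Fin.castSucc_succAbove_castSucc (i := k.succ)
  rw [← hc_last, mul_det_eq_sum_vecMul_mul_det]
  simp only [Fin.val_last, hcols, add_mul, Finset.sum_add_distrib, ite_mul, zero_mul,
    Finset.sum_ite_eq', Finset.mem_univ, if_true, submatrix_submatrix, Function.id_comp,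
    Fin.succAbove_zero, Fin.succAbove_last, hcomp_zero, hcomp_last]

end Pluecker

section OrderedRing

variable {R : Type*} [CommRing R] [LinearOrder R] [IsStrictOrderedRing R] {n : ℕ}

lemma det_submatrix_succAbove_nonneg {A : Matrix (Fin (n + 1)) (Fin (n + 2)) R}
    (hA : ∀ c : Fin n → Fin (n + 2), StrictMono c → 0 < (A.submatrix Fin.castSucc c).det)
    (hinit : 0 ≤ (A.submatrix id Fin.castSucc).det)
    (htail : 0 ≤ (A.submatrix id Fin.succ).det) (k : Fin n) :
    0 ≤ (A.submatrix id k.castSucc.succ.succAbove).det := by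
  refine nonneg_of_mul_nonneg_right ?_ (hA _ (Fin.strictMono_succ.comp Fin.strictMono_castSucc))
  rw [det_submatrix_pluecker]
  exact add_nonneg
    (mul_nonneg hinit (hA _ (Fin.strictMono_succ.comp (Fin.strictMono_succAbove _))).le)
    (mul_nonneg htail (hA _ (Fin.strictMono_castSucc.comp (Fin.strictMono_succAbove _))).le)

lemma exists_strictMono_comp_succAbove_eq {ι : Type*} [Preorder ι] {c : Fin (n + 1) → ι}
    (hc : StrictMono c) {k : Fin n} (hk : ¬ c k.castSucc ⋖ c k.succ) :
    ∃ y : Fin (n + 2) → ι, StrictMono y ∧ y ∘ k.castSucc.succ.succAbove = c := by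
  obtain ⟨l, hkl, hlk⟩ := (not_covBy_iff (hc k.castSucc_lt_succ)).1 hk
  exact ⟨k.castSucc.succ.insertNth l c, Fin.strictMono_insertNth hc k l hkl hlk,
    Fin.insertNth_comp_succAbove _ _ _⟩

-- The rows of `A` are `ω₁, …, ωₙ, f`, evaluated at points indexed by `ι`.
theorem omegaConvex_of_consecutive_windows_general {ι : Type*} [LinearOrder ι]
    [LocallyFiniteOrder ι] {A : Matrix (Fin (n + 1)) ι R}
    (hA : ∀ c : Fin n → ι, StrictMono c → 0 < (A.submatrix Fin.castSucc c).det)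
    (hwin : ∀ c : Fin (n + 1) → ι, (∀ j : Fin n, c j.castSucc ⋖ c j.succ) →
      0 ≤ (A.submatrix id c).det)
    (c : Fin (n + 1) → ι) (hc : StrictMono c) : 0 ≤ (A.submatrix id c).det := by
  induction hcard : (Finset.Icc (c 0) (c (Fin.last n))).card using Nat.strong_induction_on
    generalizing c with
  | _ _ ih =>
    subst hcard
    by_cases hcov : ∀ j : Fin n, c j.castSucc ⋖ c j.succ
    · exact hwin c hcov
    obtain ⟨k, hk⟩ := not_forall.1 hcov
    obtain ⟨y, hy, rfl⟩ := exists_strictMono_comp_succAbove_eq hc hk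
    have hzero : k.castSucc.succ.succAbove 0 = 0 := Fin.succ_succAbove_zero _
    have hlast : k.castSucc.succ.succAbove (Fin.last n) = Fin.last (n + 1) :=
      Fin.succAbove_ne_last_last (by simp [← Fin.succ_last])
    simp only [Function.comp_apply, hzero, hlast] at ih
    have hinit : 0 ≤ (A.submatrix id (y ∘ Fin.castSucc)).det :=
      ih _ (Finset.card_lt_card (Finset.Icc_ssubset_Icc_right (hy.monotone (Fin.zero_le _)) le_rfl
        (hy (Fin.castSucc_lt_last _)))) _ (hy.comp Fin.strictMono_castSucc) rfl
    have htail : 0 ≤ (A.submatrix id (y ∘ Fin.succ)).det :=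
      ih _ (Finset.card_lt_card (Finset.Icc_ssubset_Icc_left (hy.monotone (Fin.zero_le _))
        (hy (Fin.succ_pos _)) le_rfl)) _ (hy.comp Fin.strictMono_succ) rfl
    exact det_submatrix_succAbove_nonneg (A := A.submatrix id y)
      (fun d hd => hA _ (hy.comp hd)) hinit htail k

end OrderedRing

lemma val_eq_val_zero_add_of_covBy {n N : ℕ} {c : Fin (n + 1) → Fin N}
    (hc : ∀ j : Fin n, c j.castSucc ⋖ c j.succ) (j : Fin (n + 1)) :
    (c j : ℕ) = c 0 + j := by
  induction j using Fin.induction with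
  | zero => rfl
  | succ j ih =>
    have hj : (c j.castSucc : ℕ) + 1 = c j.succ := by simpa using hc j
    rw [← hj, ih, Fin.val_castSucc, Fin.val_succ, add_assoc]

lemma exists_val_eq_add_of_covBy {n m : ℕ} {c : Fin (n + 1) → Fin (m + 1)}
    (hc : ∀ j : Fin n, c j.castSucc ⋖ c j.succ) :
    ∃ i : Fin (m - n + 1), ∀ j, (c j : ℕ) = i + j := by
  have hlast : (c (Fin.last n) : ℕ) = c 0 + n := val_eq_val_zero_add_of_covBy hc (Fin.last n)
  exact ⟨⟨c 0, by omega⟩, val_eq_val_zero_add_of_covBy hc⟩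

/-- **Corollary 2.** If `f` is `ω`-convex on every window of `n+1` consecutive points
of `x₀ < ⋯ < x_m` — i.e. `Φ_{(ω,f)}(x_i,…,x_{i+n}) ≥ 0` for `0 ≤ i ≤ m−n` — then `f` is
`ω`-convex on `{x₀,…,x_m}`: `Φ_{(ω,f)}(x_{i₀},…,x_{iₙ}) ≥ 0` for all `i₀ < ⋯ < iₙ`. -/
theorem omegaConvex_of_consecutive_windows
    (n : ℕ) (hn : 0 < n) (H : Set ℝ) (hH : (↑(n + 2) : ℕ∞) ≤ H.encard)
    (ω : Fin n → ℝ → ℝ) (hω : IsPosChebyshev ω H)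
    (m : ℕ) (hnm : n ≤ m) (hm : (↑(m + 1) : ℕ∞) ≤ H.encard)
    (x : Fin (m + 1) → ℝ) (hx : StrictMono x) (hxH : ∀ i, x i ∈ H) (f : ℝ → ℝ)
    (hwin : ∀ i : Fin (m - n + 1),
      0 ≤ Phi (Fin.snoc ω f) (fun j : Fin (n + 1) =>
        x ⟨i.1 + j.1, by have h1 := i.2; have h2 := j.2; omega⟩)) :
    ∀ idx : Fin (n + 1) → Fin (m + 1), StrictMono idx →
      0 ≤ Phi (Fin.snoc ω f) (fun j => x (idx j)) := by
  refine omegaConvex_of_consecutive_windows_general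
    (A := of fun i j => (Fin.snoc ω f : Fin (n + 1) → ℝ → ℝ) i (x j))
    (fun c hc => ?_) (fun c hc => ?_)
  · simpa [submatrix, Phi] using hω (x ∘ c) (hx.comp hc) fun j => hxH (c j)
  · obtain ⟨i, hi⟩ := exists_val_eq_add_of_covBy hc
    exact (funext fun j => Fin.ext (hi j) : c = fun j => ⟨i + j, hi j ▸ (c j).2⟩) ▸ hwin i
end

section
/- Let I ⊆ ℝ be a nondegenerate interval, n ∈ ℕ, and let ω be an n-dimensional positive Chebyshev system over I. Let t ∈ ℝ₊ⁿ and f : I → ℝ. If f is cyclically (t,ω)-convex on I, then f is (r,ω)-convex on I for every r ∈ ℚ₊ⁿ (every n-tuple of positive rationals). -/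
/-- The partial sum `t₁ + ⋯ + tⱼ` (empty for `j = 0`, everything for `j = n`). -/
noncomputable def psum {n : ℕ} (t : Fin n → ℝ) (j : Fin (n + 1)) : ℝ :=
  ∑ i ∈ Finset.univ.filter (fun i : Fin n => (i : ℕ) < (j : ℕ)), t i

/-- `f` is `(t,ω)`-convex on `J`:
`Φ_{(ω,f)}(x, x+t₁h, x+(t₁+t₂)h, …, x+(t₁+⋯+tₙ)h) ≥ 0`
for all `x ∈ J` and `h > 0` with `x+(t₁+⋯+tₙ)h ∈ J`. -/
def TOmegaConvexOn {n : ℕ} (ω : Fin n → ℝ → ℝ) (t : Fin n → ℝ) (J : Set ℝ) (f : ℝ → ℝ) : Prop :=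
  ∀ x ∈ J, ∀ h : ℝ, 0 < h → x + psum t (Fin.last n) * h ∈ J →
    0 ≤ Phi (Fin.snoc ω f) (fun j => x + psum t j * h)

/-!
Order the grid points `y₀ < ⋯ < yₙ₊₁`. A Plücker-type identity among the determinants of `ω` and
of `(ω, f)` shows that if the determinant of `(ω, f)` is nonnegative after deleting `y₀` and after
deleting `yₙ₊₁`, then it is nonnegative after deleting any interior point. Inserting grid points
into the gaps of a tuple and inducting on its width, `(ω, f)`-determinants are nonnegative on a
whole grid as soon as they are so on its blocks of `n + 1` consecutive points.

Take as grid the points with successive steps `t₁, …, tₙ, t₁, …, tₙ, …` (times a scale): a block of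
consecutive points has steps a cyclic permutation of `t`, so cyclic convexity is exactly the
hypothesis needed. Going through `k` full periods moves by `k (t₁ + ⋯ + tₙ)`, whatever `t` is, so
the grid contains all configurations with integer, hence rational, step ratios.
-/

section Collocation

variable {α R : Type*} [CommRing R]

/-- The collocation matrix `(vᵢ(xⱼ))` of a family of functions `v` at a family of points `x`, whose
determinant is `Φ_v(x)` when `v` and `x` have the same length. It generalizes the matrix in `Phi` to
arbitrary point sets, so that it can be used with points indexed by `ℕ`. -/
def collocationMatrix {ι κ : Type*} (v : ι → α → R) (x : κ → α) : Matrix ι κ R :=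
  Matrix.of fun i j => v i (x j)

theorem det_collocationMatrix_insertNth {n : ℕ} (v : Fin (n + 1) → α → R) (p : Fin (n + 1)) (a : α)
    (x : Fin n → α) :
    (collocationMatrix v (p.insertNth a x : Fin (n + 1) → α)).det =
      (-1) ^ (p : ℕ) * (collocationMatrix v (Fin.cons a x : Fin (n + 1) → α)).det := by
  have hrow : ∀ q : Fin (n + 1),
      (collocationMatrix v (q.insertNth a x : Fin (n + 1) → α)).transpose =
        (q.insertNth (fun i => v i a) (fun j i => v i (x j)) : Fin (n + 1) → Fin (n + 1) → R) := by
    intro q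
    ext j i
    cases j using Fin.succAboveCases q <;> simp [collocationMatrix]
  have hcons := hrow 0
  rw [Fin.insertNth_zero', Fin.insertNth_zero'] at hcons
  rw [← Matrix.det_transpose, hrow, ← Matrix.det_transpose, hcons]
  refine ((Matrix.detRowAlternating (R := R)).map_insertNth p _ _).trans ?_
  simp only [zsmul_eq_mul, Int.cast_pow, Int.cast_neg, Int.cast_one]
  rfl

theorem det_collocationMatrix_cons_self {n : ℕ} (v : Fin (n + 1) → α → R) (x : Fin n → α)
    (j : Fin n) : (collocationMatrix v (Fin.cons (x j) x : Fin (n + 1) → α)).det = 0 :=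
  Matrix.det_zero_of_column_eq (Fin.succ_ne_zero j).symm fun i => by simp [collocationMatrix]

theorem det_collocationMatrix_cons_mem_span {n : ℕ} (v : Fin (n + 1) → α → R) (x : Fin n → α) :
    (fun a => (collocationMatrix v (Fin.cons a x : Fin (n + 1) → α)).det) ∈
      Submodule.span R (Set.range v) := by
  refine (Submodule.mem_span_range_iff_exists_fun R).2
    ⟨fun i => (-1) ^ (i : ℕ) * (collocationMatrix (i.removeNth v) x).det, ?_⟩
  ext a
  rw [Matrix.det_succ_column_zero, Finset.sum_apply]
  refine Finset.sum_congr rfl fun i _ => ?_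
  exact mul_right_comm _ _ _

theorem det_collocationMatrix_cons_eq_zero_of_mem_span {n : ℕ} {v : Fin n → α → R} {g : α → R}
    (hg : g ∈ Submodule.span R (Set.range v)) (y : Fin (n + 1) → α) :
    (collocationMatrix (Fin.cons g v : Fin (n + 1) → α → R) y).det = 0 := by
  obtain ⟨c, rfl⟩ := (Submodule.mem_span_range_iff_exists_fun R).1 hg
  set A := collocationMatrix (Fin.cons 0 v : Fin (n + 1) → α → R) y
  have hupdate : collocationMatrix (Fin.cons (∑ i, c i • v i) v : Fin (n + 1) → α → R) y =
      A.updateRow 0 (∑ k, (Fin.cons 0 c : Fin (n + 1) → R) k • A k) := by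
    ext i j
    cases i using Fin.cases <;> simp [A, collocationMatrix, Fin.sum_univ_succ]
  rw [hupdate, Matrix.det_updateRow_sum, Fin.cons_zero, zero_smul]

theorem sum_mul_det_collocationMatrix_removeNth_eq_zero {n : ℕ} {v : Fin n → α → R} {g : α → R}
    (hg : g ∈ Submodule.span R (Set.range v)) (y : Fin (n + 1) → α) :
    ∑ j : Fin (n + 1), (-1) ^ (j : ℕ) * g (y j) *
      (collocationMatrix v (j.removeNth y)).det = 0 := by
  rw [← det_collocationMatrix_cons_eq_zero_of_mem_span hg y, Matrix.det_succ_row_zero]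
  rfl

-- Take for `g` in the previous sum the determinant of `Fin.init v` as a function of one point, the
-- others being the interior points of `y` except `y (q + 1)`: only three terms of the sum survive.
theorem det_interior_mul_det_removeNth {m : ℕ} (v : Fin (m + 2) → α → R) (y : Fin (m + 3) → α)
    (q : Fin (m + 1)) :
    (collocationMatrix (Fin.init v) (Fin.init (Fin.tail y))).det *
        (collocationMatrix v (q.castSucc.succ.removeNth y)).det =
      (collocationMatrix (Fin.init v) (q.succ.removeNth (Fin.init y))).det *
          (collocationMatrix v (Fin.tail y)).det +
        (collocationMatrix (Fin.init v) (q.castSucc.removeNth (Fin.tail y))).det *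
          (collocationMatrix v (Fin.init y)).det := by
  set S : Fin m → α := q.removeNth (Fin.init (Fin.tail y))
  set g : α → R := fun a => (collocationMatrix (Fin.init v) (Fin.cons a S : Fin (m + 1) → α)).det
  have hg : g ∈ Submodule.span R (Set.range v) :=
    Submodule.span_mono (Set.range_comp_subset_range Fin.castSucc v)
      (det_collocationMatrix_cons_mem_span (Fin.init v) S)
  have hgS : ∀ j, g (y (q.succAbove j).castSucc.succ) = 0 := det_collocationMatrix_cons_self _ S
  have hinterior : Fin.init (Fin.tail y) = q.insertNth (y q.castSucc.succ) S :=
    (Fin.insertNth_self_removeNth q _).symm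
  have hfirst : q.succ.removeNth (Fin.init y) = Fin.cons (y 0) S := by
    ext j
    cases j using Fin.cases <;> simp [S, Fin.removeNth, Fin.init, Fin.tail]
  have hlast : q.castSucc.removeNth (Fin.tail y) = (Fin.last m).insertNth (y (Fin.last _)) S := by
    ext j
    cases j using Fin.lastCases <;> simp [S, Fin.removeNth, Fin.init, Fin.tail]
  have hsum := sum_mul_det_collocationMatrix_removeNth_eq_zero hg y
  rw [Fin.sum_univ_succ, Fin.sum_univ_castSucc, Fin.sum_univ_succAbove _ q] at hsum
  simp only [hgS, mul_zero, zero_mul, Finset.sum_const_zero, add_zero, Fin.succ_last,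
    Fin.removeNth_zero, Fin.removeNth_last, Fin.val_zero, Fin.val_succ, Fin.val_castSucc,
    Fin.val_last, pow_zero, pow_succ, one_mul] at hsum
  rw [hfirst, hlast, hinterior, det_collocationMatrix_insertNth, det_collocationMatrix_insertNth,
    Fin.val_last]
  linear_combination -hsum

end Collocation

section ConsecutivePoints

variable {R : Type*} [CommRing R] [LinearOrder R] [IsStrictOrderedRing R]

theorem det_collocationMatrix_removeNth_nonneg {α : Type*} [Preorder α] {m : ℕ}
    {v : Fin (m + 2) → α → R} {y : Fin (m + 3) → α} (hy : StrictMono y)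
    (hpos : ∀ x : Fin (m + 1) → α, StrictMono x → (∀ j, x j ≤ y (Fin.last _)) →
      0 < (collocationMatrix (Fin.init v) x).det)
    (htail : 0 ≤ (collocationMatrix v (Fin.tail y)).det)
    (hinit : 0 ≤ (collocationMatrix v (Fin.init y)).det) (q : Fin (m + 1)) :
    0 ≤ (collocationMatrix v (q.castSucc.succ.removeNth y)).det := by
  have hle : ∀ j, y j ≤ y (Fin.last _) := fun j => hy.monotone (Fin.le_last j)
  have hy_init : StrictMono (Fin.init y) := hy.comp Fin.strictMono_castSucc
  have hy_tail : StrictMono (Fin.tail y) := hy.comp Fin.strictMono_succ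
  have hinterior := hpos _ (hy_tail.comp Fin.strictMono_castSucc) fun _ => hle _
  have hfirst := hpos _ (hy_init.removeNth q.succ) fun _ => hle _
  have hlast := hpos _ (hy_tail.removeNth q.castSucc) fun _ => hle _
  refine nonneg_of_mul_nonneg_right ?_ hinterior
  exact (det_interior_mul_det_removeNth v y q).symm ▸
    add_nonneg (mul_nonneg hfirst.le htail) (mul_nonneg hlast.le hinit)

theorem eq_apply_zero_add_val_of_succ_eq {n : ℕ} {s : Fin (n + 1) → ℕ}
    (hs : ∀ j : Fin n, s j.succ = s j.castSucc + 1) (j : Fin (n + 1)) : s j = s 0 + j := by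
  induction j using Fin.induction with
  | zero => rfl
  | succ j ih => rw [hs, ih, Fin.val_succ, Fin.val_castSucc, add_assoc]

theorem exists_strictMono_removeNth_eq_of_succ_ne {n : ℕ} {s : Fin (n + 1) → ℕ} (hs : StrictMono s)
    {q : Fin n} (hq : s q.succ ≠ s q.castSucc + 1) :
    ∃ y : Fin (n + 2) → ℕ, StrictMono y ∧ q.castSucc.succ.removeNth y = s := by
  have hgap : s q.castSucc + 1 < s q.succ :=
    lt_of_le_of_ne (Nat.succ_le_of_lt (hs (Fin.castSucc_lt_succ (i := q)))) hq.symm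
  exact ⟨q.castSucc.succ.insertNth (s q.castSucc + 1) s,
    Fin.strictMono_insertNth hs q _ (Nat.lt_succ_self _) hgap, Fin.removeNth_insertNth _ _ _⟩

theorem det_collocationMatrix_nonneg_of_consecutive {n : ℕ} {v : Fin (n + 1) → ℕ → R} {N : ℕ}
    (hpos : ∀ x : Fin n → ℕ, StrictMono x → (∀ j, x j ≤ N) →
      0 < (collocationMatrix (Fin.init v) x).det)
    (hconsec : ∀ c, c + n ≤ N →
      0 ≤ (collocationMatrix v fun j : Fin (n + 1) => c + (j : ℕ)).det)
    {s : Fin (n + 1) → ℕ} (hs : StrictMono s) (hsN : s (Fin.last n) ≤ N) :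
    0 ≤ (collocationMatrix v s).det := by
  induction hwidth : s (Fin.last n) - s 0 using Nat.strong_induction_on generalizing s with
  | _ d ih =>
  by_cases hgap : ∀ j : Fin n, s j.succ = s j.castSucc + 1
  · have hs_eq := eq_apply_zero_add_val_of_succ_eq hgap
    rw [funext hs_eq]
    exact hconsec (s 0) (by simpa only [hs_eq (Fin.last n), Fin.val_last] using hsN)
  · push Not at hgap
    obtain ⟨q, hq⟩ := hgap
    obtain _ | m := n
    · exact q.elim0
    obtain ⟨y, hy, hy_remove⟩ := exists_strictMono_removeNth_eq_of_succ_ne hs hq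
    have hy_zero : s 0 = y 0 := by
      rw [← hy_remove, Fin.removeNth_apply, Fin.succ_succAbove_zero]
    have hy_last : s (Fin.last _) = y (Fin.last _) := by
      rw [← hy_remove, Fin.removeNth_apply, Fin.succ_castSucc,
        Fin.succAbove_ne_last_last (Fin.castSucc_ne_last _)]
    have hs_lt : s 0 < s (Fin.last _) := hs Fin.last_pos
    have htail_zero : y 0 < Fin.tail y 0 := hy (Fin.succ_pos 0)
    have htail_last : Fin.tail y (Fin.last _) = y (Fin.last _) := rfl
    have hinit_zero : Fin.init y 0 = y 0 := rfl
    have hinit_last : Fin.init y (Fin.last _) < y (Fin.last _) := hy (Fin.castSucc_lt_last _)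
    have htail := ih _ (by omega) (s := Fin.tail y) (hy.comp Fin.strictMono_succ) (by omega) rfl
    have hinit := ih _ (by omega) (s := Fin.init y) (hy.comp Fin.strictMono_castSucc) (by omega) rfl
    rw [← hy_remove]
    exact det_collocationMatrix_removeNth_nonneg hy
      (fun x hx hxy => hpos x hx fun j => (hxy j).trans (hy_last ▸ hsN)) htail hinit q

end ConsecutivePoints

section PartialSums

theorem psum_zero {n : ℕ} (t : Fin n → ℝ) : psum t 0 = 0 := by
  simp [psum]

theorem psum_succ {n : ℕ} (t : Fin n → ℝ) (j : Fin n) :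
    psum t j.succ = psum t j.castSucc + t j := by
  have hfilter : Finset.univ.filter (fun i : Fin n => (i : ℕ) < (j.succ : Fin (n + 1))) =
      Finset.cons j (Finset.univ.filter fun i : Fin n => (i : ℕ) < (j.castSucc : Fin (n + 1)))
        (by simp) := by
    ext i
    simp [le_iff_eq_or_lt, Fin.val_inj]
  rw [psum, hfilter, Finset.sum_cons, add_comm, psum]

theorem psum_const_mul {n : ℕ} (c : ℝ) (t : Fin n → ℝ) (j : Fin (n + 1)) :
    psum (fun i => c * t i) j = c * psum t j :=
  (Finset.mul_sum _ _ _).symm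

theorem psum_natCast {n : ℕ} (k : Fin n → ℕ) (j : Fin (n + 1)) :
    psum (fun i => (k i : ℝ)) j = (Fin.partialSum k j : ℕ) := by
  induction j using Fin.induction with
  | zero => simp [psum_zero]
  | succ j ih => rw [psum_succ, ih, Fin.partialSum_succ, Nat.cast_add]

variable {n : ℕ} [NeZero n]

/-- The sum of the first `c` terms of the `n`-periodic sequence `t₁, …, tₙ, t₁, …, tₙ, …`. -/
def cyclicPartialSum {M : Type*} [AddCommMonoid M] (t : Fin n → M) (c : ℕ) : M :=
  ∑ i ∈ Finset.range c, t (Fin.ofNat n i)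

theorem cyclicPartialSum_strictMono {M : Type*} [AddCommMonoid M] [PartialOrder M]
    [IsOrderedCancelAddMonoid M] {t : Fin n → M} (ht : ∀ i, 0 < t i) :
    StrictMono (cyclicPartialSum t) :=
  strictMono_nat_of_lt_succ fun c => by
    rw [cyclicPartialSum, cyclicPartialSum, Finset.sum_range_succ]
    exact lt_add_of_pos_right _ (ht _)

theorem cyclicPartialSum_add_val (t : Fin n → ℝ) (c : ℕ) (j : Fin (n + 1)) :
    cyclicPartialSum t (c + j) =
      cyclicPartialSum t c + psum (fun i => t (i + Fin.ofNat n c)) j := by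
  induction j using Fin.induction with
  | zero => simp [psum_zero]
  | succ j ih =>
    have hstep : Fin.ofNat n (c + j) = j + Fin.ofNat n c := by
      ext
      simp [Fin.val_add, add_comm]
    calc cyclicPartialSum t (c + j.succ)
        = cyclicPartialSum t (c + j.castSucc) + t (Fin.ofNat n (c + j)) :=
          Finset.sum_range_succ _ _
      _ = cyclicPartialSum t c + psum (fun i => t (i + Fin.ofNat n c)) j.succ := by
          rw [ih, psum_succ, hstep, add_assoc]

theorem cyclicPartialSum_period_mul {M : Type*} [AddCommMonoid M] (t : Fin n → M) (l : ℕ) :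
    cyclicPartialSum t (n * l) = l • ∑ i, t i := by
  induction l with
  | zero => simp [cyclicPartialSum]
  | succ l ih =>
    rw [Nat.mul_succ, cyclicPartialSum, Finset.sum_range_add, ← cyclicPartialSum, ih, succ_nsmul,
      Finset.sum_range]
    congr 1
    refine Finset.sum_congr rfl fun i _ => congrArg t (Fin.ext ?_)
    simp [Nat.mod_eq_of_lt i.2]

end PartialSums

section CyclicConvexity

variable {n : ℕ} {ω : Fin n → ℝ → ℝ} {t : Fin n → ℝ} {I : Set ℝ} {f : ℝ → ℝ}

/-- Cyclic `(t, ω)`-convexity of `f` on `J`: the function is `(t ∘ π, ω)`-convex on `J` for every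
cyclic permutation `π`, encoded as a translation `i ↦ i + k` of `Fin n`. -/
def CyclicallyTOmegaConvexOn (ω : Fin n → ℝ → ℝ) (t : Fin n → ℝ) (J : Set ℝ) (f : ℝ → ℝ) : Prop :=
  ∀ k : Fin n, TOmegaConvexOn ω (fun i => t (i + k)) J f

theorem CyclicallyTOmegaConvexOn.phi_nonneg_on_grid [NeZero n] (hI : I.OrdConnected)
    (hω : IsPosChebyshev ω I) (ht : ∀ i, 0 < t i) (hf : CyclicallyTOmegaConvexOn ω t I f)
    {x g : ℝ} (hx : x ∈ I) (hg : 0 < g) {s : Fin (n + 1) → ℕ} (hs : StrictMono s)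
    (hend : x + cyclicPartialSum t (s (Fin.last n)) * g ∈ I) :
    0 ≤ Phi (Fin.snoc ω f) fun j => x + cyclicPartialSum t (s j) * g := by
  set N := s (Fin.last n)
  set p : ℕ → ℝ := fun c => x + cyclicPartialSum t c * g with hp
  have hp_mono : StrictMono p := fun _ _ hab =>
    add_lt_add_right (mul_lt_mul_of_pos_right (cyclicPartialSum_strictMono ht hab) hg) x
  have hp_zero : p 0 = x := by simp [hp, cyclicPartialSum]
  have hp_mem : ∀ c ≤ N, p c ∈ I := fun c hc =>
    hI.out hx hend ⟨hp_zero.symm.trans_le (hp_mono.monotone c.zero_le), hp_mono.monotone hc⟩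
  refine det_collocationMatrix_nonneg_of_consecutive
    (v := fun i c => (Fin.snoc ω f : Fin (n + 1) → ℝ → ℝ) i (p c)) (N := N) ?_ ?_ hs le_rfl
  · intro u hu huN
    simpa [Fin.init, collocationMatrix, Phi] using
      hω (p ∘ u) (hp_mono.comp hu) fun j => hp_mem _ (huN j)
  · intro c hc
    have hblock : ∀ j : Fin (n + 1),
        p c + psum (fun i => t (i + Fin.ofNat n c)) j * g = p (c + j) := fun j => by
      simp only [hp, cyclicPartialSum_add_val]
      ring
    have hphi := hf (Fin.ofNat n c) (p c) (hp_mem c (by omega)) g hg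
    simp only [hblock] at hphi
    exact hphi (hp_mem _ hc)

theorem CyclicallyTOmegaConvexOn.tOmegaConvexOn_natCast [NeZero n] (hI : I.OrdConnected)
    (hω : IsPosChebyshev ω I) (ht : ∀ i, 0 < t i) (hf : CyclicallyTOmegaConvexOn ω t I f)
    {k : Fin n → ℕ} (hk : ∀ i, 0 < k i) : TOmegaConvexOn ω (fun i => (k i : ℝ)) I f := by
  intro x hx h hh hend
  have hT : 0 < ∑ i, t i := Finset.sum_pos (fun i _ => ht i) ⟨0, Finset.mem_univ 0⟩
  have hs : StrictMono fun j => n * Fin.partialSum k j := by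
    refine Fin.strictMono_iff_lt_succ.2 fun i => ?_
    rw [Fin.partialSum_succ]
    exact Nat.mul_lt_mul_of_pos_left (Nat.lt_add_of_pos_right (hk i)) (NeZero.pos n)
  have hgrid : ∀ j, x + psum (fun i => (k i : ℝ)) j * h =
      x + cyclicPartialSum t (n * Fin.partialSum k j) * (h / ∑ i, t i) := fun j => by
    rw [cyclicPartialSum_period_mul, psum_natCast, nsmul_eq_mul]
    field_simp
  simp only [hgrid] at hend ⊢
  exact hf.phi_nonneg_on_grid hI hω ht hx (div_pos hh hT) hs hend

theorem TOmegaConvexOn.of_const_mul {c : ℝ} (hc : 0 < c)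
    (hf : TOmegaConvexOn ω (fun i => c * t i) I f) : TOmegaConvexOn ω t I f := by
  intro x hx h hh hend
  have hscale : ∀ j, psum t j * h = psum (fun i => c * t i) j * (h / c) := fun j => by
    rw [psum_const_mul]
    field_simp
  simp only [hscale] at hend ⊢
  exact hf x hx _ (div_pos hh hc) hend

end CyclicConvexity

theorem exists_pos_natCast_eq_mul {ι : Type*} [Finite ι] {r : ι → ℚ} (hr : ∀ i, 0 < r i) :
    ∃ q : ℕ, 0 < q ∧ ∃ k : ι → ℕ, (∀ i, 0 < k i) ∧ ∀ i, (k i : ℚ) = q * r i := by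
  obtain ⟨b, hb⟩ := IsLocalization.exist_integer_multiples_of_finite (nonZeroDivisors ℤ) r
  have hb_pos : 0 < (b : ℤ).natAbs := Int.natAbs_pos.2 (nonZeroDivisors.ne_zero b.2)
  choose z hz using hb
  have hz_abs : ∀ i, ((z i).natAbs : ℚ) = (b : ℤ).natAbs * r i := fun i => by
    have habs := congrArg abs (hz i)
    rw [Algebra.smul_def, abs_mul, abs_of_pos (hr i)] at habs
    simpa [Nat.cast_natAbs] using habs
  refine ⟨(b : ℤ).natAbs, hb_pos, fun i => (z i).natAbs, fun i => ?_, hz_abs⟩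
  have hz_pos : (0 : ℚ) < (z i).natAbs := by
    rw [hz_abs]
    exact mul_pos (mod_cast hb_pos) (hr i)
  exact_mod_cast hz_pos

/-- **Theorem 5.** If `f` is cyclically `(t,ω)`-convex on the nondegenerate interval `I`
(i.e. `(t∘π,ω)`-convex for every cyclic permutation `π`, here `π(i) = i + k` in `Fin n`),
then `f` is `(r,ω)`-convex on `I` for every `n`-tuple `r` of positive rationals. -/
theorem rational_tOmegaConvex_of_cyclically_tOmegaConvex
    (n : ℕ) (hn : 0 < n) (I : Set ℝ) (hI : I.OrdConnected)
    (hne : ∃ a ∈ I, ∃ b ∈ I, a < b)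
    (ω : Fin n → ℝ → ℝ) (hω : IsPosChebyshev ω I)
    (t : Fin n → ℝ) (ht : ∀ i, 0 < t i) (f : ℝ → ℝ)
    (hcyc : ∀ k : Fin n, TOmegaConvexOn ω (fun i => t (i + k)) I f) :
    ∀ r : Fin n → ℚ, (∀ i, 0 < r i) →
      TOmegaConvexOn ω (fun i => (r i : ℝ)) I f := by
  intro r hr
  have : NeZero n := .of_pos hn
  have hf : CyclicallyTOmegaConvexOn ω t I f := hcyc
  obtain ⟨q, hq, k, hk, hkr⟩ := exists_pos_natCast_eq_mul hr
  have hkr_real : ∀ i, (k i : ℝ) = q * r i := fun i => mod_cast hkr i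
  refine .of_const_mul (c := q) (mod_cast hq) ?_
  simpa only [hkr_real] using hf.tOmegaConvexOn_natCast hI hω ht hk
end

section
/- Let I ⊆ ℝ be a nondegenerate interval, n ≥ 2, let ω be an n-dimensional positive Chebyshev system over I, and let (t_1,…,t_n) ∈ ℝ₊ⁿ; set t_{n+1} := t_1. If, for all pairs (k,i) ∈ {1,…,n−1} × {1,…,n}, the function f : I → ℝ is ((t_i𝟏_k, t_{i+1}𝟏_{n−k}), ω)-convex on I, then f is cyclically ((t_1,…,t_n), ω)-convex on I. -/
section Determinant

variable {n : ℕ} {ω : Fin n → ℝ → ℝ} {H : Set ℝ}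

theorem IsPosChebyshev.phi_comp_pos (hω : IsPosChebyshev ω H) {m : ℕ} {x : Fin m → ℝ}
    (hx : StrictMono x) (hxH : ∀ j, x j ∈ H) {p : Fin n → Fin m} (hp : StrictMono p) :
    0 < Phi ω (x ∘ p) :=
  hω _ (hx.comp hp) fun _ => hxH _

theorem phi_snoc_eq_sum (ω : Fin n → ℝ → ℝ) (f : ℝ → ℝ) (x : Fin (n + 1) → ℝ) :
    Phi (Fin.snoc ω f) x =
      ∑ j : Fin (n + 1), (-1) ^ (n + (j : ℕ)) * f (x j) * Phi ω (x ∘ j.succAbove) := by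
  rw [Phi, Matrix.det_succ_row _ (Fin.last n)]
  refine Finset.sum_congr rfl fun j _ => ?_
  have minor : (Matrix.of fun i j => (Fin.snoc ω f : Fin (n + 1) → ℝ → ℝ) i (x j)).submatrix
      (Fin.last n).succAbove j.succAbove = Matrix.of fun i k => ω i ((x ∘ j.succAbove) k) := by
    ext i k
    simp
  rw [minor, Phi]
  simp

theorem phi_snoc_add_sum_smul (ω : Fin n → ℝ → ℝ) (f : ℝ → ℝ) (c : Fin n → ℝ)
    (x : Fin (n + 1) → ℝ) :
    Phi (Fin.snoc ω (f + ∑ i, c i • ω i)) x = Phi (Fin.snoc ω f) x := by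
  set A : Matrix (Fin (n + 1)) (Fin (n + 1)) ℝ :=
    Matrix.of fun i j => (Fin.snoc ω f : Fin (n + 1) → ℝ → ℝ) i (x j) with hA
  have row_operation : (Matrix.of fun i j =>
      (Fin.snoc ω (f + ∑ i, c i • ω i) : Fin (n + 1) → ℝ → ℝ) i (x j)) =
      A.updateRow (Fin.last n) (∑ k, (Fin.snoc c 1 : Fin (n + 1) → ℝ) k • A k) := by
    ext i j
    induction i using Fin.lastCases with
    | last => simp [hA, Fin.sum_univ_castSucc, add_comm]
    | cast i => simp [hA]
  rw [Phi, row_operation, Matrix.det_updateRow_sum, Fin.snoc_last, one_smul, hA, Phi]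

theorem exists_phi_snoc_eq_and_vanish {y : Fin n → ℝ} (hy : Phi ω y ≠ 0) (f : ℝ → ℝ) :
    ∃ g : ℝ → ℝ, (∀ x, Phi (Fin.snoc ω g) x = Phi (Fin.snoc ω f) x) ∧ ∀ k, g (y k) = 0 := by
  obtain ⟨c, hc⟩ := Matrix.vecMul_surjective_iff_isUnit.mpr
    ((Matrix.isUnit_iff_isUnit_det _).mpr (isUnit_iff_ne_zero.mpr hy)) (-(f ∘ y))
  refine ⟨f + ∑ i, c i • ω i, phi_snoc_add_sum_smul ω f c, fun k => ?_⟩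
  have hk : ∑ i, c i * ω i (y k) = -f (y k) := congrFun hc k
  simp [hk]

theorem phi_snoc_nonneg_of_alternating {g : ℝ → ℝ} {x : Fin (n + 1) → ℝ}
    (hminor : ∀ j : Fin (n + 1), 0 ≤ Phi ω (x ∘ j.succAbove))
    (hg : ∀ j : Fin (n + 1), 0 ≤ (-1) ^ (n + (j : ℕ)) * g (x j)) :
    0 ≤ Phi (Fin.snoc ω g) x := by
  rw [phi_snoc_eq_sum]
  exact Finset.sum_nonneg fun j _ => mul_nonneg (hg j) (hminor j)

theorem phi_snoc_nonneg_iff_of_vanish {g : ℝ → ℝ} {x : Fin (n + 1) → ℝ} {j : Fin (n + 1)}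
    (hminor : 0 < Phi ω (x ∘ j.succAbove)) (hg : ∀ k ≠ j, g (x k) = 0) :
    0 ≤ Phi (Fin.snoc ω g) x ↔ 0 ≤ (-1) ^ (n + (j : ℕ)) * g (x j) := by
  rw [phi_snoc_eq_sum, Finset.sum_eq_single_of_mem j (Finset.mem_univ j)
    fun k _ hk => by rw [hg k hk]; ring]
  exact mul_nonneg_iff_of_pos_right hminor

theorem phi_snoc_comp_succAbove_nonneg (hω : IsPosChebyshev ω H) {f : ℝ → ℝ}
    {x : Fin (n + 2) → ℝ} (hx : StrictMono x) (hxH : ∀ k, x k ∈ H)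
    {j : Fin (n + 2)} (hj0 : j ≠ 0) (hjl : j ≠ Fin.last (n + 1))
    (hsucc : 0 ≤ Phi (Fin.snoc ω f) (x ∘ Fin.succ))
    (hcastSucc : 0 ≤ Phi (Fin.snoc ω f) (x ∘ Fin.castSucc)) :
    0 ≤ Phi (Fin.snoc ω f) (x ∘ j.succAbove) := by
  obtain ⟨g, hgf, hg⟩ := exists_phi_snoc_eq_and_vanish (f := f)
    (hω.phi_comp_pos hx hxH (Fin.strictMono_succ.comp Fin.strictMono_castSucc)).ne'
  have vanish : ∀ k ≠ 0, k ≠ Fin.last (n + 1) → g (x k) = 0 := by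
    intro k hk0 hkl
    obtain ⟨k, rfl⟩ := Fin.exists_succ_eq.mpr hk0
    obtain ⟨k, rfl⟩ := Fin.exists_castSucc_eq.mpr (Fin.succ_ne_last_iff k |>.mp hkl)
    exact hg k
  rw [← hgf] at hsucc hcastSucc ⊢
  have sign_last : 0 ≤ (-1) ^ (n + n) * g (x (Fin.last (n + 1))) :=
    (phi_snoc_nonneg_iff_of_vanish (j := Fin.last n)
      (hω.phi_comp_pos hx hxH (Fin.strictMono_succ.comp (Fin.strictMono_succAbove _)))
      fun k hk => vanish _ k.succ_ne_zero (Fin.succ_ne_last_iff k |>.mpr hk)).mp hsucc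
  have sign_zero : 0 ≤ (-1) ^ (n + 0) * g (x 0) :=
    (phi_snoc_nonneg_iff_of_vanish (j := 0)
      (hω.phi_comp_pos hx hxH (Fin.strictMono_castSucc.comp (Fin.strictMono_succAbove _)))
      fun k hk => vanish _ (Fin.castSucc_ne_zero_iff.mpr hk) k.castSucc_ne_last).mp hcastSucc
  refine phi_snoc_nonneg_of_alternating (fun b => (hω.phi_comp_pos hx hxH
    ((Fin.strictMono_succAbove j).comp (Fin.strictMono_succAbove b))).le) fun b => ?_
  rw [Function.comp_apply]
  rcases eq_or_ne b 0 with rfl | hb0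
  · rwa [Fin.succAbove_ne_zero_zero hj0]
  rcases eq_or_ne b (Fin.last n) with rfl | hbl
  · rwa [Fin.succAbove_ne_last_last hjl]
  · rw [vanish _ (Fin.succAbove_ne_zero hj0 hb0) (Fin.succAbove_ne_last hjl hbl), mul_zero]

theorem eq_add_val_or_exists_gap {i : Fin (n + 1) → ℕ} (hi : StrictMono i) :
    (∀ j, i j = i 0 + j) ∨ ∃ b : Fin n, i b.castSucc + 1 < i b.succ := by
  refine or_iff_not_imp_right.mpr fun hgap j => ?_
  push Not at hgap
  induction j using Fin.induction with
  | zero => simp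
  | succ b ih =>
    have lower : i b.castSucc < i b.succ := hi b.castSucc_lt_succ
    have upper := hgap b
    simp only [Fin.val_castSucc, Fin.val_succ] at ih ⊢
    lia

theorem exists_strictMono_comp_succAbove_eq_s7 {α : Type*} [Preorder α] {i : Fin (n + 1) → α}
    (hi : StrictMono i) {b : Fin n} {a : α} (hlt : i b.castSucc < a) (hgt : a < i b.succ) :
    ∃ (p : Fin (n + 2) → α) (j : Fin (n + 2)),
      StrictMono p ∧ p ∘ j.succAbove = i ∧ j ≠ 0 ∧ j ≠ Fin.last (n + 1) :=
  ⟨b.castSucc.succ.insertNth a i, b.castSucc.succ, Fin.strictMono_insertNth hi b a hlt hgt,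
    Fin.insertNth_comp_succAbove .., Fin.succ_ne_zero _,
    (Fin.succ_ne_last_iff _).mpr b.castSucc_ne_last⟩

theorem phi_snoc_nonneg_of_consecutive (hω : IsPosChebyshev ω H) {f : ℝ → ℝ} {y : ℕ → ℝ}
    (hy : StrictMono y) {M : ℕ} (hyH : ∀ k ≤ M, y k ∈ H)
    (hconsec : ∀ k, k + n ≤ M → 0 ≤ Phi (Fin.snoc ω f) fun j : Fin (n + 1) => y (k + j))
    {i : Fin (n + 1) → ℕ} (hi : StrictMono i) (hiM : i (Fin.last n) ≤ M) :
    0 ≤ Phi (Fin.snoc ω f) (y ∘ i) := by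
  induction hspan : i (Fin.last n) - i 0 using Nat.strong_induction_on generalizing i with
  | _ d ih
  obtain hi_eq | ⟨b, hb⟩ := eq_add_val_or_exists_gap hi
  · have hlast := hi_eq (Fin.last n)
    rw [Fin.val_last] at hlast
    have comp_eq : y ∘ i = fun j : Fin (n + 1) => y (i 0 + j) :=
      funext fun j => congrArg y (hi_eq j)
    rw [comp_eq]
    exact hconsec _ (hlast ▸ hiM)
  obtain ⟨p, j, hp, hpi, hj0, hjl⟩ :=
    exists_strictMono_comp_succAbove_eq_s7 hi (Nat.lt_succ_self _) hb
  have hp0 : p 0 = i 0 := by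
    rw [← hpi, Function.comp_apply, Fin.succAbove_ne_zero_zero hj0]
  have hpl : p (Fin.last (n + 1)) = i (Fin.last n) := by
    rw [← hpi, Function.comp_apply, Fin.succAbove_ne_last_last hjl]
  have hpM (k : Fin (n + 2)) : p k ≤ M := (hp.monotone k.le_last).trans (hpl.trans_le hiM)
  have span_pos : p 0 < p (Fin.last (n + 1)) := hp Fin.last_pos
  have span_succ : p (Fin.last n).succ - p (Fin.succ 0) < d := by
    have first_lt : p 0 < p (Fin.succ 0) := hp (Fin.succ_pos 0)
    rw [Fin.succ_last]
    lia
  have span_castSucc : p (Fin.last n).castSucc - p (Fin.castSucc 0) < d := by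
    have lt_last : p (Fin.last n).castSucc < p (Fin.last (n + 1)) := hp (Fin.castSucc_lt_last _)
    rw [Fin.castSucc_zero]
    lia
  have key := phi_snoc_comp_succAbove_nonneg (f := f) hω (hy.comp hp) (fun k => hyH _ (hpM k))
    hj0 hjl
    (ih _ span_succ (hp.comp Fin.strictMono_succ) (hpM _) rfl)
    (ih _ span_castSucc (hp.comp Fin.strictMono_castSucc) (hpM _) rfl)
  rwa [Function.comp_assoc, hpi] at key

end Determinant

section BlockMesh

theorem psum_eq_sum_range {n : ℕ} {t : Fin n → ℝ} {s : ℕ → ℝ} (h : ∀ l : Fin n, t l = s l)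
    (j : Fin (n + 1)) : psum t j = ∑ l ∈ Finset.range j, s l := by
  simp only [psum, h, Finset.sum_filter]
  rw [Fin.sum_univ_eq_sum_range (fun l => if l < (j : ℕ) then s l else 0), ← Finset.sum_filter]
  refine Finset.sum_congr ?_ fun _ _ => rfl
  ext l
  simp only [Finset.mem_filter, Finset.mem_range]
  lia

theorem sum_range_mul_div {α : Type*} [AddCommMonoid α] {N : ℕ} (hN : 0 < N) (u : ℕ → α) (q : ℕ) :
    ∑ l ∈ Finset.range (N * q), u (l / N) = N • ∑ l ∈ Finset.range q, u l := by
  induction q with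
  | zero => simp
  | succ q ih =>
    have block : ∑ l ∈ Finset.range N, u ((N * q + l) / N) = N • u q := by
      rw [Finset.sum_congr rfl (g := fun _ => u q) fun l hl => by
        rw [Nat.mul_add_div hN, Nat.div_eq_of_lt (Finset.mem_range.mp hl), add_zero]]
      simp
    rw [Nat.mul_succ, Finset.sum_range_add, ih, block, Finset.sum_range_succ, nsmul_add]

/-- The step vector `(u𝟏_k, v𝟏_{n-k})` of the two-block convexity hypotheses. -/
def twoBlock {n : ℕ} (k : ℕ) (u v : ℝ) : Fin n → ℝ :=
  fun m => if (m : ℕ) < k then u else v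

/-- The refined grid starting at `x`, in which each of the steps `u 0 * δ`, `u 1 * δ`, … is taken
`N` times in a row. Dividing the steps of a grid into `N` equal parts produces a grid of this form,
with `δ` the old scale divided by `N`. -/
noncomputable def blockMesh (N : ℕ) (u : ℕ → ℝ) (x δ : ℝ) (k : ℕ) : ℝ :=
  x + (∑ l ∈ Finset.range k, u (l / N)) * δ

variable {N : ℕ} {u : ℕ → ℝ} {x δ : ℝ}

theorem blockMesh_zero : blockMesh N u x δ 0 = x := by
  simp [blockMesh]

theorem strictMono_blockMesh (hu : ∀ q, 0 < u q) (hδ : 0 < δ) : StrictMono (blockMesh N u x δ) := by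
  refine strictMono_nat_of_lt_succ fun k => ?_
  simp only [blockMesh, Finset.sum_range_succ]
  gcongr
  exact lt_add_of_pos_right _ (hu _)

theorem blockMesh_mul (hN : 0 < N) (q : ℕ) :
    blockMesh N u x (δ / N) (N * q) = x + (∑ l ∈ Finset.range q, u l) * δ := by
  rw [blockMesh, sum_range_mul_div hN, nsmul_eq_mul]
  field_simp

theorem twoBlock_div_apply (hN : 0 < N) (u : ℕ → ℝ) (k : ℕ) (l : Fin (N + 1)) :
    twoBlock (N - k % N) (u (k / N)) (u (k / N + 1)) l = u ((k + l) / N) := by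
  have hk : k % N < N := Nat.mod_lt k hN
  have div_add : (k + l) / N = k / N + (k % N + l) / N := by
    rw [← Nat.mul_add_div hN, ← add_assoc, Nat.div_add_mod]
  rw [twoBlock, div_add]
  split_ifs with hl
  · rw [Nat.div_eq_of_lt (by lia : k % N + l < N), add_zero]
  · rw [Nat.div_eq_of_lt_le (by lia : 1 * N ≤ k % N + l) (by lia)]

theorem blockMesh_add (hN : 0 < N) (k : ℕ) (j : Fin (N + 2)) :
    blockMesh N u x δ (k + j) = blockMesh N u x δ k +
      psum (n := N + 1) (twoBlock (N - k % N) (u (k / N)) (u (k / N + 1))) j * δ := by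
  rw [psum_eq_sum_range (s := fun l => u ((k + l) / N)) (twoBlock_div_apply hN u k)]
  simp only [blockMesh, Finset.sum_range_add]
  ring

theorem TOmegaConvexOn.phi_blockMesh_nonneg {ω : Fin (N + 1) → ℝ → ℝ} {I : Set ℝ} {f : ℝ → ℝ}
    {k : ℕ} (hN : 0 < N) (hδ : 0 < δ)
    (hf : TOmegaConvexOn ω (twoBlock (N - k % N) (u (k / N)) (u (k / N + 1))) I f)
    (hfirst : blockMesh N u x δ k ∈ I) (hlast : blockMesh N u x δ (k + (N + 1)) ∈ I) :
    0 ≤ Phi (Fin.snoc ω f) fun j : Fin (N + 2) => blockMesh N u x δ (k + j) := by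
  simp only [blockMesh_add hN]
  exact hf _ hfirst δ hδ (blockMesh_add hN k (Fin.last (N + 1)) ▸ hlast)

end BlockMesh

theorem tOmegaConvexOn_of_twoBlock {N : ℕ} (hN : 0 < N) {ω : Fin (N + 1) → ℝ → ℝ} {I : Set ℝ}
    (hI : I.OrdConnected) (hω : IsPosChebyshev ω I) {t : Fin (N + 1) → ℝ} (ht : ∀ i, 0 < t i)
    {f : ℝ → ℝ} (hblocks : ∀ k, 1 ≤ k → k ≤ N → ∀ q : Fin N,
      TOmegaConvexOn ω (twoBlock k (t q.castSucc) (t q.succ)) I f) :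
    TOmegaConvexOn ω t I f := by
  intro x hx h hh hxh
  let u : ℕ → ℝ := fun q => t (Fin.ofNat (N + 1) q)
  have u_eq (q : Fin (N + 1)) : t q = u q := by simp [u]
  let y := blockMesh N u x (h / N)
  have hy : StrictMono y := strictMono_blockMesh (fun _ => ht _) (by positivity)
  have grid_eq (j : Fin (N + 2)) : x + psum t j * h = y (N * j) := by
    rw [psum_eq_sum_range u_eq, ← blockMesh_mul hN]
  have mem_of_le (k : ℕ) (hk : k ≤ N * (N + 1)) : y k ∈ I := by
    rw [grid_eq] at hxh
    exact hI.out hx hxh ⟨blockMesh_zero.ge.trans (hy.monotone k.zero_le), hy.monotone hk⟩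
  have consecutive (k : ℕ) (hk : k + (N + 1) ≤ N * (N + 1)) :
      0 ≤ Phi (Fin.snoc ω f) fun j : Fin (N + 2) => y (k + j) := by
    have hq : k / N < N := (Nat.div_lt_iff_lt_mul hN).mpr (by lia)
    have hr : k % N < N := Nat.mod_lt k hN
    have hf := hblocks (N - k % N) (by lia) (by lia) ⟨k / N, hq⟩
    rw [u_eq, u_eq] at hf
    exact hf.phi_blockMesh_nonneg hN (by positivity) (mem_of_le k (by lia)) (mem_of_le _ hk)
  rw [funext grid_eq]
  exact phi_snoc_nonneg_of_consecutive hω hy mem_of_le consecutive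
    (fun _ _ hab => Nat.mul_lt_mul_of_pos_left hab hN) le_rfl

/-- **Corollary 5⁺.** Let `n ≥ 2`, `(t₁,…,tₙ)` positive, and set `t_{n+1} := t₁`
(realized by the wrap-around addition of `Fin n`). If, for every `k ∈ {1,…,n−1}` and
every cyclically subsequent pair `(t_j, t_{j+1})` (`j ∈ Fin n`), the function `f` is
`((t_j 𝟏_k, t_{j+1} 𝟏_{n−k}), ω)`-convex on `I`, then `f` is cyclically
`((t₁,…,tₙ), ω)`-convex on `I`. -/
theorem cyclically_tOmegaConvex_of_twoBlock_convexities
    (n : ℕ) (hn : 2 ≤ n) (I : Set ℝ) (hI : I.OrdConnected)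
    (hne : ∃ a ∈ I, ∃ b ∈ I, a < b)
    (ω : Fin n → ℝ → ℝ) (hω : IsPosChebyshev ω I)
    (t : Fin n → ℝ) (ht : ∀ i, 0 < t i) (f : ℝ → ℝ)
    (hblocks : ∀ k : ℕ, 1 ≤ k → k < n → ∀ j : Fin n,
      TOmegaConvexOn ω
        (fun m : Fin n => if (m : ℕ) < k then t j else t (j + ⟨1, by omega⟩)) I f) :
    ∀ c : Fin n, TOmegaConvexOn ω (fun i => t (i + c)) I f := by
  obtain ⟨m, rfl⟩ := Nat.exists_eq_add_of_le' hn
  intro c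
  refine tOmegaConvexOn_of_twoBlock m.succ_pos hI hω (fun i => ht (i + c)) fun k hk hkn q => ?_
  have next : q.succ + c = q.castSucc + c + 1 := by
    rw [add_right_comm, Fin.coeSucc_eq_succ]
  rw [next]
  exact hblocks k hk (Nat.lt_succ_of_le hkn) (q.castSucc + c)
end

section
/- Let I ⊆ ℝ be a nondegenerate interval, n ∈ ℕ, let ω = (ω_1,…,ω_n) be an n-dimensional positive Chebyshev system over I, and let ω_{n+1} : I → ℝ be such that ω* = (ω_1,…,ω_n,ω_{n+1}) is an (n+1)-dimensional positive Chebyshev system over I. Let f : I → ℝ. Then, for every (x_0,…,x_n) ∈ σ_{n+1}(I), there exists p ∈ [x_0, x_n] such that [x_0,…,x_n; f]_{ω*} ≥ D̲_{ω*} f(p). -/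
/-- The lower Dinghas type derivative `D̲_{ω*} f(p)`: the limit, as `δ → 0⁺`, of the
infimum of the divided differences `[x₀,…,xₙ; f]_{ω*}` over strictly increasing
tuples in `I` with `x₀ ≤ p ≤ xₙ` and `xₙ − x₀ < δ`; realized as a `liminf`
(with values in `EReal`) along the filter `⨅ δ > 0, 𝓟 {tuples with xₙ − x₀ < δ}`. -/
noncomputable def dinghas {n : ℕ} (ω : Fin n → ℝ → ℝ) (ω' : ℝ → ℝ) (f : ℝ → ℝ)
    (I : Set ℝ) (p : ℝ) : EReal :=
  Filter.liminf (fun x : Fin (n + 1) → ℝ => (divDiff ω ω' f x : EReal))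
    (⨅ δ ∈ Set.Ioi (0 : ℝ), Filter.principal
      {x : Fin (n + 1) → ℝ | StrictMono x ∧ (∀ j, x j ∈ I) ∧
        x 0 ≤ p ∧ p ≤ x (Fin.last n) ∧ x (Fin.last n) - x 0 < δ})

/-!
Insert an extra node into `x` strictly between its end points. The interpolant of `f` in the span of
`ω*` at the old nodes has leading coefficient `[x; f]`, and the remaining error is supported at the
new node. By the alternating signs of the cofactors, deleting the left end point or the right end
point shifts the divided difference in opposite directions, so one of the two deletions does not
increase it, and it shortens the spanned interval. Hence, among the tuples from a fine finite mesh
with divided difference at most `[x; f]`, one spanning a minimal interval consists of consecutive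
mesh points and is therefore narrow. Iterating with finer meshes gives nested intervals, whose
common point is the required `p`.
-/

open Set

section StrictMonoTuples

section Preorder

variable {α β : Type*} [Preorder α] [Preorder β] {n : ℕ} {H S : Set α}

/-- The set `σ_n(H)` of strictly increasing `n`-tuples of elements of `H`. -/
def strictMonoTuples (n : ℕ) (H : Set α) : Set (Fin n → α) :=
  {x | StrictMono x ∧ ∀ j, x j ∈ H}

lemma strictMonoTuples_mono (h : S ⊆ H) : strictMonoTuples n S ⊆ strictMonoTuples n H :=
  fun _ hx => ⟨hx.1, fun j => h (hx.2 j)⟩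

lemma finite_strictMonoTuples (hS : S.Finite) : (strictMonoTuples n S).Finite :=
  (Set.Finite.pi' fun _ => hS).subset fun _ hx => hx.2

lemma removeNth_mem_strictMonoTuples {z : Fin (n + 1) → α} (hz : z ∈ strictMonoTuples (n + 1) H)
    (p : Fin (n + 1)) : p.removeNth z ∈ strictMonoTuples n H :=
  ⟨hz.1.comp (Fin.strictMono_succAbove p), fun _ => hz.2 _⟩

/-- The property of a function `d` of `n + 1` nodes that drives the refinement argument: among
`n + 2` nodes, deleting an interior one gives a value bounded below by one of the two values
obtained by deleting an end point. The interior indices of `Fin (n + 2)` are encoded as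
`j.succ.castSucc` with `j : Fin n`. -/
def DescendsByEndDeletion (d : (Fin (n + 1) → α) → β) (H : Set α) : Prop :=
  ∀ z ∈ strictMonoTuples (n + 2) H, ∀ j : Fin n,
    d ((0 : Fin (n + 2)).removeNth z) ≤ d (j.succ.castSucc.removeNth z) ∨
      d ((Fin.last (n + 1)).removeNth z) ≤ d (j.succ.castSucc.removeNth z)

lemma DescendsByEndDeletion.mono {d : (Fin (n + 1) → α) → β}
    (hd : DescendsByEndDeletion d H) (h : S ⊆ H) : DescendsByEndDeletion d S :=
  fun z hz => hd z (strictMonoTuples_mono h hz)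

end Preorder

section LinearOrder

variable {α β : Type*} [LinearOrder α] [Preorder β] {n : ℕ} {H S : Set α}

lemma exists_castSucc_lt_and_lt_succ {x : Fin (n + 1) → α} {y : α}
    (hy : y ∈ Ioo (x 0) (x (Fin.last n))) (hyx : y ∉ range x) :
    ∃ j : Fin n, x j.castSucc < y ∧ y < x j.succ := by
  by_contra! hle
  have hlt (i : Fin (n + 1)) : x i < y := by
    induction i using Fin.induction with
    | zero => exact hy.1
    | succ i ih => exact (hle i ih).lt_of_ne fun h => hyx ⟨_, h⟩
  exact (hlt (Fin.last n)).not_gt hy.2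

lemma notMem_range_of_mem_Ioo_castSucc_succ {u : Fin (n + 1) → α} (hu : StrictMono u)
    {i : Fin n} {y : α} (hy : y ∈ Ioo (u i.castSucc) (u i.succ)) :
    y ∉ range u := by
  rintro ⟨k, rfl⟩
  exact (Fin.castSucc_lt_iff_succ_le.mp (hu.lt_iff_lt.mp hy.1)).not_gt (hu.lt_iff_lt.mp hy.2)

lemma exists_insertNth_mem_strictMonoTuples {x : Fin (n + 1) → α} {y : α}
    (hx : x ∈ strictMonoTuples (n + 1) H) (hyH : y ∈ H) (hy : y ∈ Ioo (x 0) (x (Fin.last n)))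
    (hyx : y ∉ range x) :
    ∃ j : Fin n, j.succ.castSucc.insertNth y x ∈ strictMonoTuples (n + 2) H := by
  obtain ⟨j, hjy, hyj⟩ := exists_castSucc_lt_and_lt_succ hy hyx
  refine ⟨j, (Fin.strictMono_insertNth_iff _ _ _).mpr ⟨hx.1, fun i hi => ?_, fun i hi => ?_⟩, ?_⟩
  · rw [Fin.castSucc_lt_castSucc_iff, ← Fin.le_castSucc_iff] at hi
    exact (hx.1.monotone hi).trans_lt hjy
  · exact hyj.trans_le (hx.1.monotone (Fin.castSucc_le_castSucc_iff.mp hi))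
  · rw [Fin.forall_iff_succAbove j.succ.castSucc]
    simpa using ⟨hyH, hx.2⟩

namespace DescendsByEndDeletion

variable {d : (Fin (n + 1) → α) → β} {x : Fin (n + 1) → α}

lemma exists_Icc_ssubset (hd : DescendsByEndDeletion d H) (hx : x ∈ strictMonoTuples (n + 1) H)
    {y : α} (hyH : y ∈ H) (hy : y ∈ Ioo (x 0) (x (Fin.last n))) (hyx : y ∉ range x) :
    ∃ u ∈ strictMonoTuples (n + 1) H,
      d u ≤ d x ∧ Icc (u 0) (u (Fin.last n)) ⊂ Icc (x 0) (x (Fin.last n)) := by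
  obtain ⟨j, hz⟩ := exists_insertNth_mem_strictMonoTuples hx hyH hy hyx
  set z : Fin (n + 2) → α := j.succ.castSucc.insertNth y x
  have hzx : j.succ.castSucc.removeNth z = x := Fin.removeNth_insertNth _ _ _
  have hz_zero : z 0 = x 0 := by
    rw [← hzx, Fin.removeNth_apply, Fin.succAbove_ne_zero_zero (by simp)]
  have hz_last : z (Fin.last (n + 1)) = x (Fin.last n) := by
    rw [← hzx, Fin.removeNth_apply, Fin.succAbove_ne_last_last (Fin.castSucc_ne_last _)]
  have hz_le : z 0 ≤ z (Fin.last (n + 1)) := hz.1.monotone (Fin.zero_le _)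
  rw [← hz_zero, ← hz_last]
  rcases hd z hz j with h | h <;> rw [hzx] at h
  · exact ⟨_, removeNth_mem_strictMonoTuples hz 0, h,
      Icc_ssubset_Icc_left hz_le (hz.1 (Fin.succ_pos 0)) le_rfl⟩
  · exact ⟨_, removeNth_mem_strictMonoTuples hz (Fin.last (n + 1)), h,
      Icc_ssubset_Icc_right hz_le (by simp [Fin.removeNth_apply])
        (by simpa [Fin.removeNth_apply] using hz.1 (Fin.castSucc_lt_last _))⟩

lemma exists_inter_Ioo_subset_range (hd : DescendsByEndDeletion d S) (hS : S.Finite)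
    (hx : x ∈ strictMonoTuples (n + 1) S) :
    ∃ u ∈ strictMonoTuples (n + 1) S, d u ≤ d x ∧
      Icc (u 0) (u (Fin.last n)) ⊆ Icc (x 0) (x (Fin.last n)) ∧
      S ∩ Ioo (u 0) (u (Fin.last n)) ⊆ range u := by
  let span (u : Fin (n + 1) → α) : Set α := Icc (u 0) (u (Fin.last n))
  obtain ⟨u, ⟨hu, hux, hspan⟩, hmin⟩ :=
    ((finite_strictMonoTuples hS).subset
      (sep_subset _ fun u => d u ≤ d x ∧ span u ⊆ span x)).exists_minimalFor span _
      ⟨x, hx, le_rfl, Subset.rfl⟩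
  refine ⟨u, hu, hux, hspan, fun y ⟨hyS, hy⟩ => ?_⟩
  by_contra hyu
  obtain ⟨v, hv, hvu, hsub⟩ := hd.exists_Icc_ssubset hu hyS hy hyu
  exact hsub.2 (hmin ⟨hv, hvu.trans hux, hsub.1.trans hspan⟩ hsub.1)

end DescendsByEndDeletion

end LinearOrder

end StrictMonoTuples

section RealTuples

variable {n : ℕ}

lemma exists_finite_inter_Ioo_nonempty (a b : ℝ) {ε : ℝ} (hε : 0 < ε) :
    ∃ T ⊆ Icc a b, T.Finite ∧
      ∀ s ∈ Icc a b, ∀ t ∈ Icc a b, ε ≤ t - s → (T ∩ Ioo s t).Nonempty := by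
  obtain ⟨T, hTab, hTfin, hT⟩ := (isCompact_Icc (a := a) (b := b)).finite_cover_balls (half_pos hε)
  refine ⟨T, hTab, hTfin, fun s hs t ht hst => ?_⟩
  have hmid : (s + t) / 2 ∈ Icc a b := ⟨by linarith [hs.1, ht.1], by linarith [hs.2, ht.2]⟩
  obtain ⟨y, hyT, hy⟩ := mem_iUnion₂.mp (hT hmid)
  rw [Metric.mem_ball, Real.dist_eq, abs_lt] at hy
  exact ⟨y, hyT, by linarith, by linarith⟩

lemma last_sub_zero_le_mul {u : Fin (n + 1) → ℝ} {ε : ℝ}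
    (hu : ∀ i : Fin n, u i.succ - u i.castSucc ≤ ε) : u (Fin.last n) - u 0 ≤ n * ε := by
  suffices h : ∀ i : Fin (n + 1), u i - u 0 ≤ (i : ℕ) * ε by simpa using h (Fin.last n)
  intro i
  induction i using Fin.induction with
  | zero => simp
  | succ i ih =>
    rw [Fin.val_castSucc] at ih
    rw [Fin.val_succ, Nat.cast_add_one]
    linarith [hu i]

lemma DescendsByEndDeletion.exists_last_sub_zero_lt {β : Type*} [Preorder β]
    {d : (Fin (n + 1) → ℝ) → β} {I : Set ℝ} (hd : DescendsByEndDeletion d I)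
    (hI : I.OrdConnected) {x : Fin (n + 1) → ℝ} (hx : x ∈ strictMonoTuples (n + 1) I)
    {δ : ℝ} (hδ : 0 < δ) :
    ∃ u ∈ strictMonoTuples (n + 1) I, d u ≤ d x ∧
      Icc (u 0) (u (Fin.last n)) ⊆ Icc (x 0) (x (Fin.last n)) ∧ u (Fin.last n) - u 0 < δ := by
  obtain ⟨T, hTx, hTfin, hT⟩ := exists_finite_inter_Ioo_nonempty (x 0) (x (Fin.last n))
    (ε := δ / (n + 1)) (by positivity)
  have hSI : T ∪ range x ⊆ I :=
    union_subset (hTx.trans (hI.out (hx.2 _) (hx.2 _))) (range_subset_iff.mpr hx.2)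
  obtain ⟨u, hu, hux, hsub, hwindow⟩ := (hd.mono hSI).exists_inter_Ioo_subset_range
    (hTfin.union (finite_range x)) ⟨hx.1, fun j => Or.inr (mem_range_self j)⟩
  have hu_mem (i : Fin (n + 1)) : u i ∈ Icc (u 0) (u (Fin.last n)) :=
    ⟨hu.1.monotone (Fin.zero_le i), hu.1.monotone (Fin.le_last i)⟩
  have hgap (i : Fin n) : u i.succ - u i.castSucc ≤ δ / (n + 1) := by
    by_contra! hlt
    obtain ⟨y, hyT, hy⟩ := hT _ (hsub (hu_mem i.castSucc)) _ (hsub (hu_mem i.succ)) hlt.le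
    exact notMem_range_of_mem_Ioo_castSucc_succ hu.1 hy
      (hwindow ⟨Or.inl hyT, (hu_mem _).1.trans_lt hy.1, hy.2.trans_le (hu_mem _).2⟩)
  refine ⟨u, strictMonoTuples_mono hSI hu, hux, hsub, ?_⟩
  calc u (Fin.last n) - u 0 ≤ n * (δ / (n + 1)) := last_sub_zero_le_mul hgap
    _ < (n + 1) * (δ / (n + 1)) := by gcongr; exact lt_add_one _
    _ = δ := mul_div_cancel₀ _ (by positivity)

lemma exists_mem_Icc_of_forall_exists_Icc_subset {X : Type*} {a b : X → ℝ}
    (hab : ∀ u, a u ≤ b u)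
    (hshrink : ∀ u, ∀ δ > 0, ∃ v, Icc (a v) (b v) ⊆ Icc (a u) (b u) ∧ b v - a v < δ) (x : X) :
    ∃ p ∈ Icc (a x) (b x), ∀ δ > 0, ∃ v, p ∈ Icc (a v) (b v) ∧ b v - a v < δ := by
  have hnext (k : ℕ) (u : X) := hshrink u (1 / ((k : ℝ) + 1)) Nat.one_div_pos_of_nat
  choose next hsub hlt using hnext
  let s (k : ℕ) : X := Nat.rec x next k
  have hanti : Antitone fun k => Icc (a (s k)) (b (s k)) :=
    antitone_nat_of_succ_le fun k => hsub k (s k)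
  have hp := mem_iInter.mp (ciSup_mem_iInter_Icc_of_antitone_Icc hanti fun k => hab (s k))
  refine ⟨_, hp 0, fun δ hδ => ?_⟩
  obtain ⟨k, hk⟩ := exists_nat_one_div_lt hδ
  exact ⟨s (k + 1), hp (k + 1), (hlt k (s k)).trans hk⟩

lemma DescendsByEndDeletion.exists_mem_Icc_forall_pos {β : Type*} [Preorder β]
    {d : (Fin (n + 1) → ℝ) → β} {I : Set ℝ} (hd : DescendsByEndDeletion d I)
    (hI : I.OrdConnected) {x : Fin (n + 1) → ℝ} (hx : x ∈ strictMonoTuples (n + 1) I) :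
    ∃ p ∈ Icc (x 0) (x (Fin.last n)), ∀ δ > 0, ∃ u ∈ strictMonoTuples (n + 1) I,
      p ∈ Icc (u 0) (u (Fin.last n)) ∧ u (Fin.last n) - u 0 < δ ∧ d u ≤ d x := by
  let X := {u // u ∈ strictMonoTuples (n + 1) I ∧ d u ≤ d x}
  obtain ⟨p, hp, h⟩ := exists_mem_Icc_of_forall_exists_Icc_subset
    (a := fun u : X => u.1 0) (b := fun u : X => u.1 (Fin.last n))
    (fun u => u.2.1.1.monotone (Fin.zero_le _))
    (fun u δ hδ => by
      obtain ⟨v, hv, hvu, hsub, hlt⟩ := hd.exists_last_sub_zero_lt hI u.2.1 hδ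
      exact ⟨⟨v, hv, hvu.trans u.2.2⟩, hsub, hlt⟩)
    ⟨x, hx, le_rfl⟩
  refine ⟨p, hp, fun δ hδ => ?_⟩
  obtain ⟨u, hpu, hlt⟩ := h δ hδ
  exact ⟨u.1, u.2.1, hpu, hlt, u.2.2⟩

end RealTuples

section ChebyshevSystems

variable {n : ℕ} {ω : Fin n → ℝ → ℝ} {ω' : ℝ → ℝ} {I : Set ℝ}

lemma IsPosChebyshev.Phi_pos (hω : IsPosChebyshev ω I) {x : Fin n → ℝ}
    (hx : x ∈ strictMonoTuples n I) : 0 < Phi ω x :=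
  hω x hx.1 hx.2

lemma Phi_snoc_eq_sum (ω : Fin n → ℝ → ℝ) (h : ℝ → ℝ) (u : Fin (n + 1) → ℝ) :
    Phi (Fin.snoc ω h) u
      = ∑ j : Fin (n + 1), (-1) ^ (n + (j : ℕ)) * h (u j) * Phi ω (j.removeNth u) := by
  unfold Phi
  rw [Matrix.det_succ_row _ (Fin.last n)]
  refine Finset.sum_congr rfl fun j _ => ?_
  simp only [Fin.val_last, Matrix.of_apply, Fin.snoc_last]
  congr 2
  ext i k
  simp [Fin.removeNth_apply]

lemma Phi_snoc_eq_of_forall_ne {h : ℝ → ℝ} {u : Fin (n + 1) → ℝ} {q : Fin (n + 1)}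
    (hq : ∀ i ≠ q, h (u i) = 0) :
    Phi (Fin.snoc ω h) u = (-1) ^ (n + (q : ℕ)) * h (u q) * Phi ω (q.removeNth u) := by
  rw [Phi_snoc_eq_sum, Fintype.sum_eq_single q fun i hi => by simp [hq i hi]]

lemma Phi_snoc_self (ω : Fin n → ℝ → ℝ) (k : Fin n) (u : Fin (n + 1) → ℝ) :
    Phi (Fin.snoc ω (ω k)) u = 0 :=
  Matrix.det_zero_of_row_eq (Fin.castSucc_lt_last k).ne (by ext; simp)

lemma Phi_snoc_sub_sum {ι : Type*} [Fintype ι] (ω : Fin n → ℝ → ℝ) (f : ℝ → ℝ) (c : ι → ℝ)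
    (g : ι → ℝ → ℝ) (u : Fin (n + 1) → ℝ) :
    Phi (Fin.snoc ω fun t => f t - ∑ k, c k * g k t) u
      = Phi (Fin.snoc ω f) u - ∑ k, c k * Phi (Fin.snoc ω (g k)) u := by
  simp only [Phi_snoc_eq_sum, Finset.mul_sum]
  rw [Finset.sum_comm, ← Finset.sum_sub_distrib]
  refine Finset.sum_congr rfl fun j _ => ?_
  rw [mul_sub, sub_mul, Finset.mul_sum, Finset.sum_mul]
  exact congrArg _ (Finset.sum_congr rfl fun k _ => by ring)

lemma exists_interpolant {y : Fin n → ℝ} (hy : Phi ω y ≠ 0) (f : ℝ → ℝ) :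
    ∃ c : Fin n → ℝ, ∀ i, ∑ k, c k * ω k (y i) = f (y i) := by
  have hunit : IsUnit (Matrix.of fun i j => ω i (y j)) :=
    (Matrix.isUnit_iff_isUnit_det _).mpr hy.isUnit
  obtain ⟨c, hc⟩ := Matrix.vecMul_surjective_iff_isUnit.mpr hunit (f ∘ y)
  exact ⟨c, congrFun hc⟩

lemma divDiff_sub_sum (f : ℝ → ℝ) (c : Fin (n + 1) → ℝ) {u : Fin (n + 1) → ℝ}
    (hu : Phi (Fin.snoc ω ω') u ≠ 0) :
    divDiff ω ω' (fun t => f t - ∑ k, c k * (Fin.snoc ω ω' : Fin (n + 1) → ℝ → ℝ) k t) u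
      = divDiff ω ω' f u - c (Fin.last n) := by
  unfold divDiff
  rw [Phi_snoc_sub_sum, Fin.sum_univ_castSucc]
  simp only [Fin.snoc_castSucc, Fin.snoc_last, Phi_snoc_self, mul_zero, Finset.sum_const_zero,
    zero_add]
  rw [sub_div, mul_div_cancel_right₀ _ hu]

lemma Phi_snoc_removeNth_nonpos (hω : IsPosChebyshev ω I) {z : Fin (n + 2) → ℝ}
    (hz : z ∈ strictMonoTuples (n + 2) I) {j : Fin n} {h : ℝ → ℝ}
    (hj : ∀ i ≠ j.succ.castSucc, h (z i) = 0) :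
    Phi (Fin.snoc ω h) ((0 : Fin (n + 2)).removeNth z) ≤ 0 ∨
      Phi (Fin.snoc ω h) ((Fin.last (n + 1)).removeNth z) ≤ 0 := by
  have hpos (p : Fin (n + 2)) (q : Fin (n + 1)) : 0 < Phi ω (q.removeNth (p.removeNth z)) :=
    hω.Phi_pos (removeNth_mem_strictMonoTuples (removeNth_mem_strictMonoTuples hz p) q)
  have hPhi {p : Fin (n + 2)} {q : Fin (n + 1)} (hpq : p.succAbove q = j.succ.castSucc) :
      Phi (Fin.snoc ω h) (p.removeNth z)
        = (-1) ^ (n + (q : ℕ)) * h (z j.succ.castSucc) * Phi ω (q.removeNth (p.removeNth z)) := by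
    rw [← hpq]
    refine Phi_snoc_eq_of_forall_ne fun i hi => hj _ ?_
    rwa [← hpq, ne_eq, Fin.succAbove_right_inj]
  rw [hPhi (p := 0) (q := j.castSucc) rfl, hPhi (Fin.succAbove_last_apply j.succ),
    Fin.val_castSucc, Fin.val_succ, ← add_assoc, pow_succ, mul_neg_one, neg_mul]
  rcases le_total ((-1) ^ (n + (j : ℕ)) * h (z j.succ.castSucc)) 0 with hle | hge
  · exact Or.inl (mul_nonpos_of_nonpos_of_nonneg hle (hpos _ _).le)
  · exact Or.inr (mul_nonpos_of_nonpos_of_nonneg (neg_nonpos.mpr hge) (hpos _ _).le)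

lemma descendsByEndDeletion_divDiff (hω : IsPosChebyshev ω I)
    (hωs : IsPosChebyshev (Fin.snoc ω ω') I) (f : ℝ → ℝ) :
    DescendsByEndDeletion (divDiff ω ω' f) I := by
  intro z hz j
  have hpos (p : Fin (n + 2)) : 0 < Phi (Fin.snoc ω ω') (p.removeNth z) :=
    hωs.Phi_pos (removeNth_mem_strictMonoTuples hz p)
  obtain ⟨c, hc⟩ := exists_interpolant (hpos j.succ.castSucc).ne' f
  let error (t : ℝ) : ℝ := f t - ∑ k, c k * (Fin.snoc ω ω' : Fin (n + 1) → ℝ → ℝ) k t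
  have herror_node (i : Fin (n + 1)) : error (j.succ.castSucc.removeNth z i) = 0 :=
    sub_eq_zero.mpr (hc i).symm
  have hdivDiff (p : Fin (n + 2)) :
      divDiff ω ω' error (p.removeNth z) = divDiff ω ω' f (p.removeNth z) - c (Fin.last n) :=
    divDiff_sub_sum f c (hpos p).ne'
  have hleading : divDiff ω ω' f (j.succ.castSucc.removeNth z) = c (Fin.last n) := by
    rw [← sub_eq_zero, ← hdivDiff, divDiff, Phi_snoc_eq_sum]
    simp only [herror_node, mul_zero, zero_mul, Finset.sum_const_zero, zero_div]
  have hle (p : Fin (n + 2)) (hp : Phi (Fin.snoc ω error) (p.removeNth z) ≤ 0) :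
      divDiff ω ω' f (p.removeNth z) ≤ divDiff ω ω' f (j.succ.castSucc.removeNth z) := by
    rw [hleading, ← sub_nonpos, ← hdivDiff]
    exact div_nonpos_of_nonpos_of_nonneg hp (hpos p).le
  have herror (i : Fin (n + 2)) (hi : i ≠ j.succ.castSucc) : error (z i) = 0 := by
    obtain ⟨i, rfl⟩ := Fin.exists_succAbove_eq hi
    exact herror_node i
  exact (Phi_snoc_removeNth_nonpos hω hz herror).imp (hle 0) (hle (Fin.last (n + 1)))

lemma dinghas_le_of_forall_pos_exists {f : ℝ → ℝ} {p : ℝ} {A : EReal}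
    (h : ∀ δ > 0, ∃ u ∈ strictMonoTuples (n + 1) I, p ∈ Icc (u 0) (u (Fin.last n)) ∧
      u (Fin.last n) - u 0 < δ ∧ (divDiff ω ω' f u : EReal) ≤ A) :
    dinghas ω ω' f I p ≤ A := by
  have hbasis := Filter.hasBasis_biInf_principal' (p := (· ∈ Ioi (0 : ℝ)))
    (s := fun δ => {u : Fin (n + 1) → ℝ | StrictMono u ∧ (∀ j, u j ∈ I) ∧
      u 0 ≤ p ∧ p ≤ u (Fin.last n) ∧ u (Fin.last n) - u 0 < δ})
    (fun δ hδ ε hε => ⟨min δ ε, mem_Ioi.mpr (lt_min hδ hε),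
      fun _ ⟨hmono, hmem, h₀, h₁, hlt⟩ => ⟨hmono, hmem, h₀, h₁, hlt.trans_le (min_le_left _ _)⟩,
      fun _ ⟨hmono, hmem, h₀, h₁, hlt⟩ => ⟨hmono, hmem, h₀, h₁, hlt.trans_le (min_le_right _ _)⟩⟩)
    ⟨1, mem_Ioi.mpr one_pos⟩
  refine Filter.liminf_le_of_frequently_le' (hbasis.frequently_iff.mpr fun δ hδ => ?_)
  obtain ⟨u, hu, hpu, hlt, hle⟩ := h δ hδ
  exact ⟨u, ⟨hu.1, hu.2, hpu.1, hpu.2, hlt⟩, hle⟩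

end ChebyshevSystems

/-- **Theorem 6 (mean value inequality).** For every strictly increasing tuple
`(x₀,…,xₙ)` in `I` there is a point `p ∈ [x₀, xₙ]` with
`[x₀,…,xₙ; f]_{ω*} ≥ D̲_{ω*} f(p)`. -/
theorem divDiff_ge_dinghas_at_some_point
    (n : ℕ) (hn : 0 < n) (I : Set ℝ) (hI : I.OrdConnected)
    (hne : ∃ a ∈ I, ∃ b ∈ I, a < b)
    (ω : Fin n → ℝ → ℝ) (ω' : ℝ → ℝ)
    (hω : IsPosChebyshev ω I) (hωs : IsPosChebyshev (Fin.snoc ω ω') I)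
    (f : ℝ → ℝ) (x : Fin (n + 1) → ℝ) (hx : StrictMono x) (hxI : ∀ j, x j ∈ I) :
    ∃ p ∈ Set.Icc (x 0) (x (Fin.last n)),
      dinghas ω ω' f I p ≤ (divDiff ω ω' f x : EReal) := by
  obtain ⟨p, hp, h⟩ :=
    (descendsByEndDeletion_divDiff hω hωs f).exists_mem_Icc_forall_pos hI ⟨hx, hxI⟩
  refine ⟨p, hp, dinghas_le_of_forall_pos_exists fun δ hδ => ?_⟩
  obtain ⟨u, hu, hpu, hlt, hle⟩ := h δ hδ
  exact ⟨u, hu, hpu, hlt, EReal.coe_le_coe_iff.mpr hle⟩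
end
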